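/- Let n ≥ 1, α > 0 and 1 < q ≤ 1 + α/n. Suppose the coefficients a_{ij} satisfy condition (8) with this α and some c > 0. Let u be a non-negative function, continuous on [0,∞) × ℝⁿ and C¹ on S with |u|^q locally integrable, which is an entire weak solution on S of u_t ≥ Lu + |u|^{q−1}u, with arbitrary initial data u(0,·). Then u = 0 in S. -/

import Mathlib

open MeasureTheory Real

noncomputable section

/-- Euclidean space ℝⁿ. -/
abbrev Xn (n : ℕ) : Type := EuclideanSpace ℝ (Fin n)

/-- Points of the half-space `S = (0,∞) × ℝⁿ`. -/
abbrev Pt (n : ℕ) : Type := ℝ × Xn n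

/-- The half-space `S = (0,∞) × ℝⁿ`. -/
def halfSpace (n : ℕ) : Set (Pt n) := {p | 0 < p.1}

/-- Partial derivative in the time variable. -/
noncomputable def pdT {n : ℕ} (w : Pt n → ℝ) (p : Pt n) : ℝ :=
  fderiv ℝ w p (1, 0)

/-- Partial derivative in the space variable `x_j`. -/
noncomputable def pdX {n : ℕ} (w : Pt n → ℝ) (j : Fin n) (p : Pt n) : ℝ :=
  fderiv ℝ w p (0, EuclideanSpace.single j 1)

/-- The odd power function `x ↦ |x|^{q-1} x`. -/
noncomputable def oddPow (q x : ℝ) : ℝ := |x| ^ (q - 1) * x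

/-- Condition (8): `𝒜(R) ≤ c R^{2-α}` for all `R > 1`, expressed as an a.e. bound
on the majorant `A` over the region `{(t,x) : t > 0, R/2 < |x| < R}`. -/
def Cond8 {n : ℕ} (A : Pt n → ℝ) (α c : ℝ) : Prop :=
  ∀ R : ℝ, 1 < R →
    ∀ᵐ p ∂(volume.restrict
        {p : Pt n | 0 < p.1 ∧ R / 2 < ‖p.2‖ ∧ ‖p.2‖ < R}),
      A p ≤ c * R ^ (2 - α)

/-- `u` is an entire weak solution of `u_t ≥ Lu + |u|^{q−1}u` in `S`. -/
def WeakSuperSol {n : ℕ} (a : Fin n → Fin n → Pt n → ℝ) (q : ℝ)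
    (u : Pt n → ℝ) : Prop :=
  ∀ φ : Pt n → ℝ, ContDiff ℝ (⊤ : ℕ∞) φ → HasCompactSupport φ →
    tsupport φ ⊆ halfSpace n → (∀ p, 0 ≤ φ p) →
    0 ≤ ∫ p in halfSpace n,
        (pdT u p * φ p + ∑ i, ∑ j, a i j p * pdX φ i p * pdX u j p
          - oddPow q (u p) * φ p)

/-- `v` is an entire weak solution of `v_t ≤ Lv + |v|^{q−1}v` in `S`. -/
def WeakSubSol {n : ℕ} (a : Fin n → Fin n → Pt n → ℝ) (q : ℝ)
    (v : Pt n → ℝ) : Prop :=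
  ∀ φ : Pt n → ℝ, ContDiff ℝ (⊤ : ℕ∞) φ → HasCompactSupport φ →
    tsupport φ ⊆ halfSpace n → (∀ p, 0 ≤ φ p) →
    ∫ p in halfSpace n,
        (pdT v p * φ p + ∑ i, ∑ j, a i j p * pdX φ i p * pdX v j p
          - oddPow q (v p) * φ p) ≤ 0

/-!
Reduce to the critical exponent `α = n (q - 1)` and rescale to `U = R^n u`, which satisfies
`U_t ≥ LU + R^{-α} U^q`, a source of the same order `R^{-α}` as the derivatives of a cutoff `ζ` on
the parabolic cylinder `{t ≤ R^α, |x| ≤ R}`. Testing with `(U + κ)^{-γ} ζ^{k+2}` bounds the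
gradient energy, because the source absorbs the cutoff terms by Young's inequality. Testing with
`ζ^{k+2}` then bounds the integral `I_R` of `u^q ζ^{k+2}` by the part `J_R` of it where `ζ`
varies: for every `η > 0` there is `M` with `I_R ≤ M J_R + η` for all `R > 1`, and also
`I_R ≤ J_R / 2 + C`. The second estimate makes `u^q` integrable over the half-space, so `J_R → 0`,
and then the first forces the integral of `u^q` to vanish.
-/

open Set Filter
open scoped Convolution Pointwise Topology

section Scalar

lemma rpow_le_rpow_sub_one_mul_add_rpow {θ z Z : ℝ} (hθ0 : 0 ≤ θ) (hθ1 : θ ≤ 1) (hz : 0 < z)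
    (hZ : 0 ≤ Z) : Z ^ θ ≤ z ^ (θ - 1) * Z + z ^ θ := by
  rcases le_total Z z with hle | hle
  · exact (rpow_le_rpow hZ hle hθ0).trans (le_add_of_nonneg_left (by positivity))
  · have hZpos : 0 < Z := hz.trans_le hle
    calc Z ^ θ = Z ^ (θ - 1) * Z := by rw [rpow_sub_one hZpos.ne', div_mul_cancel₀ _ hZpos.ne']
      _ ≤ z ^ (θ - 1) * Z := by
        gcongr ?_ * Z
        exact rpow_le_rpow_of_nonpos hz hle (by linarith)
      _ ≤ z ^ (θ - 1) * Z + z ^ θ := le_add_of_nonneg_right (by positivity)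

lemma mul_rpow_le_mul_add {θ z : ℝ} (hθ0 : 0 ≤ θ) (hθ1 : θ ≤ 1) (hz : 0 < z) (K : ℝ) :
    ∀ Z, 0 ≤ Z → K * Z ^ θ ≤ (|K| + 1) * z ^ (θ - 1) * Z + (|K| + 1) * z ^ θ := fun Z hZ =>
  calc K * Z ^ θ ≤ (|K| + 1) * Z ^ θ := by gcongr; linarith [le_abs_self K]
    _ ≤ (|K| + 1) * (z ^ (θ - 1) * Z + z ^ θ) := by
      gcongr; exact rpow_le_rpow_sub_one_mul_add_rpow hθ0 hθ1 hz hZ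
    _ = (|K| + 1) * z ^ (θ - 1) * Z + (|K| + 1) * z ^ θ := by ring

lemma exists_pos_mul_rpow_eq {p b d : ℝ} (hp : p ≠ 0) (hb : 0 < b) (hd : 0 < d) :
    ∃ z, 0 < z ∧ b * z ^ p = d :=
  ⟨(d / b) ^ p⁻¹, by positivity, by
    rw [rpow_inv_rpow (by positivity) hp, mul_div_cancel₀ _ hb.ne']⟩

lemma exists_const_mul_rpow_le_mul_add {θ : ℝ} (hθ0 : 0 ≤ θ) (hθ1 : θ < 1) (K : ℝ) {μ : ℝ}
    (hμ : 0 < μ) : ∃ C, 0 < C ∧ ∀ Z, 0 ≤ Z → K * Z ^ θ ≤ μ * Z + C := by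
  obtain ⟨z, hz, hzμ⟩ :=
    exists_pos_mul_rpow_eq (sub_ne_zero.2 hθ1.ne) (by positivity : 0 < |K| + 1) hμ
  exact ⟨(|K| + 1) * z ^ θ, by positivity, hzμ ▸ mul_rpow_le_mul_add hθ0 hθ1.le hz K⟩

lemma exists_slope_mul_rpow_le_mul_add {θ : ℝ} (hθ0 : 0 < θ) (hθ1 : θ ≤ 1) (K : ℝ) {η : ℝ}
    (hη : 0 < η) : ∃ M, 0 < M ∧ ∀ Z, 0 ≤ Z → K * Z ^ θ ≤ M * Z + η := by
  obtain ⟨z, hz, hzη⟩ := exists_pos_mul_rpow_eq hθ0.ne' (by positivity : 0 < |K| + 1) hη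
  exact ⟨(|K| + 1) * z ^ (θ - 1), by positivity, hzη ▸ mul_rpow_le_mul_add hθ0.le hθ1 hz K⟩

lemma exists_const_mul_rpow_add_mul_rpow_le {θ₁ θ₂ : ℝ} (hθ₁ : θ₁ ∈ Ico 0 1)
    (hθ₂ : θ₂ ∈ Ico 0 1) (K₁ K₂ : ℝ) {μ : ℝ} (hμ : 0 < μ) :
    ∃ C, 0 < C ∧ ∀ Z, 0 ≤ Z → K₁ * Z ^ θ₁ + K₂ * Z ^ θ₂ ≤ μ * Z + C := by
  obtain ⟨C₁, hC₁, h₁⟩ := exists_const_mul_rpow_le_mul_add hθ₁.1 hθ₁.2 K₁ (half_pos hμ)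
  obtain ⟨C₂, hC₂, h₂⟩ := exists_const_mul_rpow_le_mul_add hθ₂.1 hθ₂.2 K₂ (half_pos hμ)
  exact ⟨C₁ + C₂, by positivity, fun Z hZ => by linarith [h₁ Z hZ, h₂ Z hZ]⟩

lemma exists_slope_mul_rpow_add_mul_rpow_le {θ₁ θ₂ : ℝ} (hθ₁ : θ₁ ∈ Ioc 0 1)
    (hθ₂ : θ₂ ∈ Ioc 0 1) (K₁ K₂ : ℝ) {η : ℝ} (hη : 0 < η) :
    ∃ M, 0 < M ∧ ∀ Z, 0 ≤ Z → K₁ * Z ^ θ₁ + K₂ * Z ^ θ₂ ≤ M * Z + η := by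
  obtain ⟨M₁, hM₁, h₁⟩ := exists_slope_mul_rpow_le_mul_add hθ₁.1 hθ₁.2 K₁ (half_pos hη)
  obtain ⟨M₂, hM₂, h₂⟩ := exists_slope_mul_rpow_le_mul_add hθ₂.1 hθ₂.2 K₂ (half_pos hη)
  exact ⟨M₁ + M₂, by positivity, fun Z hZ => by linarith [h₁ Z hZ, h₂ Z hZ]⟩

lemma rpow_mul_pow_le_rpow_mul_pow_rpow_div {X ζ r s : ℝ} {k l : ℕ} (hX : 0 ≤ X) (hζ0 : 0 ≤ ζ)
    (hζ1 : ζ ≤ 1) (hr : 0 ≤ r) (hs : 0 < s) (hkl : l * (r / s) ≤ k) :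
    X ^ r * ζ ^ k ≤ (X ^ s * ζ ^ l) ^ (r / s) := by
  have : 0 ≤ r / s := by positivity
  rw [mul_rpow (by positivity) (by positivity), ← rpow_mul hX, mul_div_cancel₀ _ hs.ne',
    ← rpow_natCast ζ l, ← rpow_mul hζ0, ← rpow_natCast ζ k]
  gcongr X ^ r * ?_
  exact rpow_le_rpow_of_exponent_ge' hζ0 hζ1 (by positivity) hkl

lemma rpow_add_le_mul_add_rpow {x y q : ℝ} (hx : 0 ≤ x) (hy : 0 ≤ y) (hq : 1 ≤ q) :
    (x + y) ^ q ≤ 2 ^ (q - 1) * (x ^ q + y ^ q) := by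
  exact_mod_cast NNReal.rpow_add_le_mul_rpow_add_rpow ⟨x, hx⟩ ⟨y, hy⟩ hq

lemma exists_nat_add_two_mul_le {r : ℝ} (hr : r < 1) : ∃ k : ℕ, (k + 2) * r ≤ k := by
  obtain ⟨k, hk⟩ := exists_nat_ge (2 * r / (1 - r))
  rw [div_le_iff₀ (by linarith)] at hk
  exact ⟨k, by linarith⟩

end Scalar

section CompactSupport

variable {X : Type*} [TopologicalSpace X] [MeasurableSpace X] {μ : Measure X} {s K : Set X}

lemma integrableOn_of_forall_notMem_compact {f : X → ℝ} (hf : LocallyIntegrableOn f s μ)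
    (hs : MeasurableSet s) (hK : IsCompact K) (hKs : K ⊆ s) (hfK : ∀ x ∉ K, f x = 0) :
    IntegrableOn f s μ :=
  (hf.integrableOn_compact_subset hKs hK).of_forall_sdiff_eq_zero hs fun x hx => hfK x hx.2

variable [OpensMeasurableSpace X] [T2Space X]

lemma integrableOn_of_bounded_on_compacts [IsFiniteMeasureOnCompacts μ] {f : X → ℝ}
    (hf : AEStronglyMeasurable f μ) (hfs : ∀ K, IsCompact K → K ⊆ s → ∃ M, ∀ x ∈ K, |f x| ≤ M)
    (hK : IsCompact K) (hKs : K ⊆ s) : IntegrableOn f K μ := by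
  obtain ⟨M, hM⟩ := hfs K hK hKs
  exact Measure.integrableOn_of_bounded hK.measure_lt_top.ne hf
    ((ae_restrict_iff' hK.measurableSet).2 (.of_forall hM))

lemma integrableOn_mul_of_forall_notMem_compact [LocallyCompactSpace X]
    [SecondCountableTopology X] {b f : X → ℝ} (hs : IsOpen s) (hb : LocallyIntegrableOn b s μ)
    (hf : ContinuousOn f s) (hK : IsCompact K) (hKs : K ⊆ s) (hfK : ∀ x ∉ K, f x = 0) :
    IntegrableOn (fun x => b x * f x) s μ :=
  integrableOn_of_forall_notMem_compact (hb.mul_continuousOn hf hs.isLocallyClosed)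
    hs.measurableSet hK hKs fun x hx => by rw [hfK x hx, mul_zero]

lemma integrableOn_indicator_const_of_compact [IsFiniteMeasureOnCompacts μ] (hK : IsCompact K)
    (b : ℝ) : IntegrableOn (K.indicator fun _ => b) s μ :=
  (IntegrableOn.integrable_indicator (integrableOn_const hK.measure_lt_top.ne)
    hK.measurableSet).integrableOn

end CompactSupport

section Mollification

variable {E : Type*} [NormedAddCommGroup E] [NormedSpace ℝ E] [FiniteDimensional ℝ E]
  [MeasurableSpace E] [BorelSpace E]

lemma integral_fderiv_apply_eq_zero (μ : Measure E) [μ.IsAddHaarMeasure] {f : E → ℝ}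
    (hf : ContDiff ℝ 1 f) (hfc : HasCompactSupport f) (v : E) : ∫ x, fderiv ℝ f x v ∂μ = 0 := by
  have hint : Integrable (fun x => fderiv ℝ f x v) μ :=
    ((hf.continuous_fderiv one_ne_zero).clm_apply
      continuous_const).integrable_of_hasCompactSupport (hfc.fderiv_apply ℝ v)
  have hparts := integral_mul_fderiv_eq_neg_fderiv_mul_of_integrable (μ := μ)
    (f := fun _ => (1 : ℝ)) (g := f) (v := v) (by simp) (by simpa using hint)
    (by simpa using hf.continuous.integrable_of_hasCompactSupport hfc)
    (fun x _ => differentiableAt_const _) (fun x _ => hf.differentiable one_ne_zero x)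
  simpa using hparts

variable [HasContDiffBump E]

lemma tsupport_normed_convolution_subset (μ : Measure E) [μ.IsAddHaarMeasure]
    (f : ContDiffBump (0 : E)) (φ : E → ℝ) :
    tsupport (f.normed μ ⋆[ContinuousLinearMap.lsmul ℝ ℝ, μ] φ) ⊆
      Metric.cthickening f.rOut (tsupport φ) := by
  refine closure_minimal ?_ Metric.isClosed_cthickening
  calc Function.support (f.normed μ ⋆[ContinuousLinearMap.lsmul ℝ ℝ, μ] φ)
      ⊆ Metric.ball (0 : E) f.rOut + tsupport φ := by
        rw [← f.support_normed_eq (μ := μ)]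
        exact (support_convolution_subset _).trans (add_subset_add_left (subset_tsupport φ))
    _ = Metric.thickening f.rOut (tsupport φ) := by rw [ball_add_zero]
    _ ⊆ Metric.cthickening f.rOut (tsupport φ) := Metric.thickening_subset_cthickening _ _

lemma fderiv_normed_convolution (μ : Measure E) [μ.IsAddHaarMeasure] (f : ContDiffBump (0 : E))
    {φ : E → ℝ} (hφ : ContDiff ℝ 1 φ) (hφc : HasCompactSupport φ) :
    fderiv ℝ (f.normed μ ⋆[ContinuousLinearMap.lsmul ℝ ℝ, μ] φ) =
      f.normed μ ⋆[ContinuousLinearMap.lsmul ℝ ℝ, μ] fderiv ℝ φ :=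
  funext fun x => (hφc.hasFDerivAt_convolution_right (ContinuousLinearMap.lsmul ℝ ℝ)
    f.continuous_normed.locallyIntegrable hφ x).fderiv

lemma exists_contDiff_approx {φ : E → ℝ} (hφ : ContDiff ℝ 1 φ) (hφc : HasCompactSupport φ)
    (hφ0 : ∀ x, 0 ≤ φ x) {δ ε : ℝ} (hδ : 0 < δ) (hε : 0 < ε) :
    ∃ ψ : E → ℝ, ContDiff ℝ (⊤ : ℕ∞) ψ ∧ (∀ x, 0 ≤ ψ x) ∧
      tsupport ψ ⊆ Metric.cthickening δ (tsupport φ) ∧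
      (∀ x, |ψ x - φ x| ≤ ε) ∧ ∀ x, ‖fderiv ℝ ψ x - fderiv ℝ φ x‖ ≤ ε := by
  obtain ⟨d₀, hd₀, hd₀φ⟩ := Metric.uniformContinuous_iff.1
    (hφc.uniformContinuous_of_continuous hφ.continuous) ε hε
  obtain ⟨d₁, hd₁, hd₁φ⟩ := Metric.uniformContinuous_iff.1
    ((hφc.fderiv ℝ).uniformContinuous_of_continuous (hφ.continuous_fderiv one_ne_zero)) ε hε
  set d := min δ (min d₀ d₁)
  have hdpos : 0 < d := by positivity
  let f : ContDiffBump (0 : E) := ⟨d / 2, d, by positivity, by linarith⟩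
  let μ : Measure E := Measure.addHaar
  refine ⟨f.normed μ ⋆[ContinuousLinearMap.lsmul ℝ ℝ, μ] φ, ?_, fun x => ?_, ?_, fun x => ?_,
    fun x => ?_⟩
  · exact f.hasCompactSupport_normed.contDiff_convolution_left _ f.contDiff_normed
      hφ.continuous.locallyIntegrable
  · exact integral_nonneg fun t => mul_nonneg (f.nonneg_normed t) (hφ0 _)
  · exact (tsupport_normed_convolution_subset μ f φ).trans
      (Metric.cthickening_mono (min_le_left _ _) _)
  · rw [← Real.dist_eq]
    exact f.dist_normed_convolution_le hφ.continuous.aestronglyMeasurable fun y hy =>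
      (hd₀φ (hy.trans_le ((min_le_right _ _).trans (min_le_left _ _)))).le
  · rw [← dist_eq_norm, fderiv_normed_convolution μ f hφ hφc]
    exact f.dist_normed_convolution_le
      (hφ.continuous_fderiv one_ne_zero).aestronglyMeasurable fun y hy =>
      (hd₁φ (hy.trans_le ((min_le_right _ _).trans (min_le_right _ _)))).le

end Mollification

section Absorption

variable {Ω ι : Type*} [MeasurableSpace Ω] {ν : Measure Ω} {l : Filter ι} [l.NeBot]
  [l.IsCountablyGenerated] {Q : ι → Set Ω} {f : Ω → ℝ} {g : ι → Ω → ℝ}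

lemma setIntegral_le_integral_of_indicator_le {s : Set Ω} (hs : MeasurableSet s) {f g : Ω → ℝ}
    (hf : 0 ≤ᵐ[ν] f) (hg : Integrable g ν) (hfg : s.indicator f ≤ᵐ[ν] g) :
    ∫ x in s, f x ∂ν ≤ ∫ x, g x ∂ν := by
  rw [← integral_indicator hs]
  refine integral_mono_of_nonneg ?_ hg hfg
  filter_upwards [hf] with x hx using indicator_apply_nonneg fun _ => hx

lemma integrable_of_integral_le_half_add (hQ : AECover ν l Q) (hf : 0 ≤ᵐ[ν] f)
    (hfQ : ∀ i, IntegrableOn f (Q i) ν) (hg : ∀ i, Integrable (g i) ν)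
    (hfg : ∀ i, (Q i).indicator f ≤ᵐ[ν] g i) (hg0 : ∀ i, 0 ≤ᵐ[ν] g i) {C : ℝ}
    (hC : ∀ i, ∫ x, g i x ∂ν ≤ 1 / 2 * ∫ x in (Q i)ᶜ, g i x ∂ν + C) : Integrable f ν := by
  refine hQ.integrable_of_integral_bounded_of_nonneg_ae (2 * C) hfQ hf (.of_forall fun i => ?_)
  calc ∫ x in Q i, f x ∂ν ≤ ∫ x, g i x ∂ν :=
        setIntegral_le_integral_of_indicator_le (hQ.measurableSet i) hf (hg i) (hfg i)
    _ ≤ 2 * C := by linarith [hC i, setIntegral_le_integral (s := (Q i)ᶜ) (hg i) (hg0 i)]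

lemma integral_eq_zero_of_forall_integral_le_mul_add (hQ : AECover ν l Q) (hf : 0 ≤ᵐ[ν] f)
    (hfi : Integrable f ν) (hg : ∀ i, Integrable (g i) ν)
    (hfg : ∀ i, (Q i).indicator f ≤ᵐ[ν] g i) (hgf : ∀ i, g i ≤ᵐ[ν] f)
    (hη : ∀ η > 0, ∃ M, 0 < M ∧
      ∀ i, ∫ x, g i x ∂ν ≤ M * ∫ x in (Q i)ᶜ, g i x ∂ν + η) : ∫ x, f x ∂ν = 0 := by
  have hlim := hQ.integral_tendsto_of_countably_generated hfi
  refine le_antisymm (le_of_forall_pos_le_add fun η hηpos => ?_) (integral_nonneg_of_ae hf)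
  obtain ⟨M, hM0, hM⟩ := hη η hηpos
  have hbound : ∀ i, ∫ x in Q i, f x ∂ν ≤ M * (∫ x, f x ∂ν - ∫ x in Q i, f x ∂ν) + η := fun i =>
    calc ∫ x in Q i, f x ∂ν ≤ ∫ x, g i x ∂ν :=
          setIntegral_le_integral_of_indicator_le (hQ.measurableSet i) hf (hg i) (hfg i)
      _ ≤ M * ∫ x in (Q i)ᶜ, g i x ∂ν + η := hM i
      _ ≤ M * ∫ x in (Q i)ᶜ, f x ∂ν + η := by
        gcongr M * ?_ + η
        exact integral_mono_ae (hg i).restrict hfi.restrict (ae_restrict_of_ae (hgf i))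
      _ = M * (∫ x, f x ∂ν - ∫ x in Q i, f x ∂ν) + η := by
        rw [setIntegral_compl (hQ.measurableSet i) hfi]
  simpa using le_of_tendsto_of_tendsto' hlim (((hlim.const_sub _).const_mul M).add_const η) hbound

end Absorption

section HalfSpace

lemma isOpen_halfSpace (n : ℕ) : IsOpen (halfSpace n) :=
  isOpen_lt continuous_const continuous_fst

lemma measurableSet_halfSpace (n : ℕ) : MeasurableSet (halfSpace n) :=
  (isOpen_halfSpace n).measurableSet

instance isAddHaarMeasure_volume_pt (n : ℕ) : (volume : Measure (Pt n)).IsAddHaarMeasure :=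
  inferInstanceAs ((volume : Measure ℝ).prod (volume : Measure (Xn n))).IsAddHaarMeasure

variable {n : ℕ}

/-- The spatial gradient `∇w = (∂w/∂x₁, …, ∂w/∂xₙ)` as a plain coordinate vector, which is the form
in which the coefficient matrix acts on it. -/
def gradX (w : Pt n → ℝ) (p : Pt n) : Fin n → ℝ := fun i => pdX w i p

lemma continuousOn_pdT {w : Pt n → ℝ} (hw : ContDiffOn ℝ 1 w (halfSpace n)) :
    ContinuousOn (pdT w) (halfSpace n) :=
  (hw.continuousOn_fderiv_of_isOpen (isOpen_halfSpace n) le_rfl).clm_apply continuousOn_const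

lemma continuousOn_gradX {w : Pt n → ℝ} (hw : ContDiffOn ℝ 1 w (halfSpace n)) :
    ContinuousOn (gradX w) (halfSpace n) :=
  continuousOn_pi.2 fun _ => (hw.continuousOn_fderiv_of_isOpen (isOpen_halfSpace n)
    le_rfl).clm_apply continuousOn_const

lemma differentiableAt_of_mem_halfSpace {w : Pt n → ℝ} (hw : ContDiffOn ℝ 1 w (halfSpace n))
    {p : Pt n} (hp : p ∈ halfSpace n) : DifferentiableAt ℝ w p :=
  (hw.contDiffAt ((isOpen_halfSpace n).mem_nhds hp)).differentiableAt one_ne_zero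

lemma gradX_of_notMem_tsupport {φ : Pt n → ℝ} {p : Pt n} (hp : p ∉ tsupport φ) :
    gradX φ p = 0 :=
  funext fun i => by simp [gradX, pdX, fderiv_of_notMem_tsupport ℝ hp]

lemma pdT_of_notMem_tsupport {φ : Pt n → ℝ} {p : Pt n} (hp : p ∉ tsupport φ) : pdT φ p = 0 := by
  simp [pdT, fderiv_of_notMem_tsupport ℝ hp]

lemma gradX_sub {φ ψ : Pt n → ℝ} {p : Pt n} (hφ : DifferentiableAt ℝ φ p)
    (hψ : DifferentiableAt ℝ ψ p) : gradX (fun x => φ x - ψ x) p = gradX φ p - gradX ψ p := by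
  ext i; simp [gradX, pdX, fderiv_fun_sub hφ hψ]

lemma abs_gradX_le_norm_fderiv (φ : Pt n → ℝ) (p : Pt n) (i : Fin n) :
    |gradX φ p i| ≤ ‖fderiv ℝ φ p‖ := by
  simpa [gradX, pdX, Prod.norm_def] using
    (fderiv ℝ φ p).le_opNorm ((0, EuclideanSpace.single i 1) : Pt n)

lemma integrableOn_pdT {f : Pt n → ℝ} (hf : ContDiff ℝ 1 f) (hfc : HasCompactSupport f) :
    IntegrableOn (pdT f) (halfSpace n) :=
  (((hf.continuous_fderiv one_ne_zero).clm_apply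
    continuous_const).integrable_of_hasCompactSupport (hfc.fderiv_apply ℝ _)).integrableOn

lemma setIntegral_pdT_eq_zero {f : Pt n → ℝ} (hf : ContDiff ℝ 1 f) (hfc : HasCompactSupport f)
    (hfS : tsupport f ⊆ halfSpace n) : ∫ p in halfSpace n, pdT f p = 0 := by
  rw [setIntegral_eq_integral_of_forall_compl_eq_zero fun p hp =>
    pdT_of_notMem_tsupport fun h => hp (hfS h)]
  exact integral_fderiv_apply_eq_zero volume hf hfc (1, 0)

end HalfSpace

section CoeffForm

variable {n : ℕ} {a : Fin n → Fin n → Pt n → ℝ}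

/-- The bilinear form `(x, y) ↦ Σ a_{ij}(p) x_i y_j` of the coefficients at the point `p`. -/
def coeffForm (a : Fin n → Fin n → Pt n → ℝ) (p : Pt n) : LinearMap.BilinForm ℝ (Fin n → ℝ) :=
  Matrix.toBilin' (Matrix.of fun i j => a i j p)

lemma coeffForm_apply (a : Fin n → Fin n → Pt n → ℝ) (p : Pt n) (x y : Fin n → ℝ) :
    coeffForm a p x y = ∑ i, ∑ j, a i j p * (x i * y j) := by
  simp only [coeffForm, Matrix.toBilin'_apply, Matrix.of_apply]
  exact Finset.sum_congr rfl fun i _ => Finset.sum_congr rfl fun j _ => by ring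

/-- Admissible coefficients of the divergence form operator `L`: locally integrable on the
half-space with a symmetric positive semidefinite matrix at almost every point. No lower bound on
the matrix is required, so `L` may degenerate. -/
structure DegenerateElliptic (a : Fin n → Fin n → Pt n → ℝ) : Prop where
  locallyIntegrableOn : ∀ i j, LocallyIntegrableOn (a i j) (halfSpace n)
  isPosSemidef : ∀ᵐ p ∂volume.restrict (halfSpace n), (coeffForm a p).IsPosSemidef

lemma bilinForm_le_mul_add_inv_mul {V : Type*} [AddCommGroup V] [Module ℝ V]
    {B : LinearMap.BilinForm ℝ V} (hB : B.IsPosSemidef) {ε : ℝ} (hε : 0 < ε) (x y : V) :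
    B x y ≤ ε * B y y + (4 * ε)⁻¹ * B x x := by
  have hsq := hB.isNonneg.nonneg (x - (2 * ε) • y)
  have hxy : B y x = B x y := hB.isSymm.eq y x
  simp only [map_sub, map_smul, LinearMap.sub_apply, LinearMap.smul_apply, smul_eq_mul, hxy] at hsq
  have h := mul_nonneg (by positivity : 0 ≤ (4 * ε)⁻¹) hsq
  calc B x y ≤ B x y + (4 * ε)⁻¹ * _ := le_add_of_nonneg_right h
    _ = ε * B y y + (4 * ε)⁻¹ * B x x := by field

lemma integrableOn_coeffForm (ha : ∀ i j, LocallyIntegrableOn (a i j) (halfSpace n))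
    {x y : Pt n → Fin n → ℝ} (hx : ContinuousOn x (halfSpace n))
    (hy : ContinuousOn y (halfSpace n)) {K : Set (Pt n)} (hK : IsCompact K)
    (hKS : K ⊆ halfSpace n) (hxK : ∀ p ∉ K, x p = 0) :
    IntegrableOn (fun p => coeffForm a p (x p) (y p)) (halfSpace n) := by
  simp only [coeffForm_apply]
  refine integrable_finsetSum _ fun i _ => integrable_finsetSum _ fun j _ => ?_
  refine integrableOn_mul_of_forall_notMem_compact (isOpen_halfSpace n) (ha i j)
    ((continuousOn_pi.1 hx i).mul (continuousOn_pi.1 hy j)) hK hKS fun p hp => ?_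
  rw [hxK p hp, Pi.zero_apply, zero_mul]

end CoeffForm

section WeakInequality

variable {n : ℕ} {a : Fin n → Fin n → Pt n → ℝ} {h w φ ψ : Pt n → ℝ} {p : Pt n}

/-- The integrand of the weak form of `w_t ≥ Lw + h` tested against `φ`. -/
def weakIntegrand (a : Fin n → Fin n → Pt n → ℝ) (h w φ : Pt n → ℝ) (p : Pt n) : ℝ :=
  pdT w p * φ p + coeffForm a p (gradX φ p) (gradX w p) - h p * φ p

/-- `w` satisfies `w_t ≥ Lw + h` weakly on the half-space, tested against nonnegative functions that
are only `C¹`; this admits test functions built from powers of `w` itself. -/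
def IsWeakSupersol (a : Fin n → Fin n → Pt n → ℝ) (h w : Pt n → ℝ) : Prop :=
  ∀ φ : Pt n → ℝ, ContDiff ℝ 1 φ → HasCompactSupport φ → tsupport φ ⊆ halfSpace n →
    (∀ p, 0 ≤ φ p) → 0 ≤ ∫ p in halfSpace n, weakIntegrand a h w φ p

lemma integrableOn_weakIntegrand (ha : ∀ i j, LocallyIntegrableOn (a i j) (halfSpace n))
    (hh : LocallyIntegrableOn h (halfSpace n)) (hw : ContDiffOn ℝ 1 w (halfSpace n))
    (hφ : ContDiff ℝ 1 φ) (hφc : HasCompactSupport φ) (hφS : tsupport φ ⊆ halfSpace n) :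
    IntegrableOn (weakIntegrand a h w φ) (halfSpace n) := by
  have hφ0 : ∀ p ∉ tsupport φ, φ p = 0 := fun p hp => image_eq_zero_of_notMem_tsupport hp
  have hT : LocallyIntegrableOn (pdT w) (halfSpace n) :=
    (continuousOn_pdT hw).locallyIntegrableOn (measurableSet_halfSpace n)
  exact ((integrableOn_mul_of_forall_notMem_compact (isOpen_halfSpace n) hT
    hφ.continuous.continuousOn hφc hφS hφ0).add
    (integrableOn_coeffForm ha (continuousOn_gradX hφ.contDiffOn) (continuousOn_gradX hw) hφc hφS
      fun p => gradX_of_notMem_tsupport)).sub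
    (integrableOn_mul_of_forall_notMem_compact (isOpen_halfSpace n) hh
      hφ.continuous.continuousOn hφc hφS hφ0)

lemma weakIntegrand_sub (hφ : DifferentiableAt ℝ φ p) (hψ : DifferentiableAt ℝ ψ p) :
    weakIntegrand a h w (fun x => φ x - ψ x) p =
      weakIntegrand a h w φ p - weakIntegrand a h w ψ p := by
  simp only [weakIntegrand, gradX_sub hφ hψ, map_sub, LinearMap.sub_apply]
  ring

lemma weakIntegrand_of_notMem_tsupport (hp : p ∉ tsupport φ) : weakIntegrand a h w φ p = 0 := by
  simp [weakIntegrand, gradX_of_notMem_tsupport hp, image_eq_zero_of_notMem_tsupport hp]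

lemma weakIntegrand_le_mul_of_abs_le {ε : ℝ} (hφ : |φ p| ≤ ε) (hφ' : ‖fderiv ℝ φ p‖ ≤ ε) :
    weakIntegrand a h w φ p ≤
      ε * (‖pdT w p‖ + ∑ i, ∑ j, ‖a i j p * gradX w p j‖ + ‖h p‖) := by
  have hε : 0 ≤ ε := (abs_nonneg _).trans hφ
  have hT : pdT w p * φ p ≤ ε * ‖pdT w p‖ := by
    rw [mul_comm ε]
    exact (le_abs_self _).trans ((abs_mul _ _).trans_le (by gcongr; rfl))
  have hh : -(h p * φ p) ≤ ε * ‖h p‖ := by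
    rw [mul_comm ε]
    exact (neg_le_abs _).trans ((abs_mul _ _).trans_le (by gcongr; rfl))
  have hX : coeffForm a p (gradX φ p) (gradX w p) ≤ ε * ∑ i, ∑ j, ‖a i j p * gradX w p j‖ := by
    rw [coeffForm_apply]
    simp_rw [Finset.mul_sum]
    refine Finset.sum_le_sum fun i _ => Finset.sum_le_sum fun j _ => ?_
    calc a i j p * (gradX φ p i * gradX w p j)
        ≤ |gradX φ p i * (a i j p * gradX w p j)| :=
          (le_abs_self _).trans_eq (by rw [mul_left_comm])
      _ ≤ ε * ‖a i j p * gradX w p j‖ := by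
        rw [abs_mul]
        gcongr
        exacts [(abs_gradX_le_norm_fderiv φ p i).trans hφ', le_rfl]
  unfold weakIntegrand
  linarith

lemma exists_contDiff_setIntegral_weakIntegrand_le
    (ha : ∀ i j, LocallyIntegrableOn (a i j) (halfSpace n))
    (hh : LocallyIntegrableOn h (halfSpace n)) (hw : ContDiffOn ℝ 1 w (halfSpace n))
    (hφ : ContDiff ℝ 1 φ) (hφc : HasCompactSupport φ) (hφS : tsupport φ ⊆ halfSpace n)
    (hφ0 : ∀ p, 0 ≤ φ p) : ∃ G : ℝ, ∀ ε > 0, ∃ ψ : Pt n → ℝ, ContDiff ℝ (⊤ : ℕ∞) ψ ∧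
      HasCompactSupport ψ ∧ tsupport ψ ⊆ halfSpace n ∧ (∀ p, 0 ≤ ψ p) ∧
      ∫ p in halfSpace n, weakIntegrand a h w ψ p ≤
        (∫ p in halfSpace n, weakIntegrand a h w φ p) + ε * G := by
  obtain ⟨δ, hδ, hKS⟩ := hφc.isCompact.exists_cthickening_subset_open (isOpen_halfSpace n) hφS
  set K := Metric.cthickening δ (tsupport φ)
  have hK : IsCompact K := hφc.isCompact.cthickening
  let D : Pt n → ℝ := fun p => ‖pdT w p‖ + ∑ i, ∑ j, ‖a i j p * gradX w p j‖ + ‖h p‖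
  have hD : IntegrableOn (K.indicator D) (halfSpace n) := by
    refine (IntegrableOn.integrable_indicator ?_ hK.measurableSet).integrableOn
    refine ((((continuousOn_pdT hw).mono hKS).norm.integrableOn_compact hK).add
      (integrable_finsetSum _ fun i _ => integrable_finsetSum _ fun j _ => ?_)).add
      (hh.integrableOn_compact_subset hKS hK).norm
    exact (((ha i j).mul_continuousOn (continuousOn_pi.1 (continuousOn_gradX hw) j)
      (isOpen_halfSpace n).isLocallyClosed).integrableOn_compact_subset hKS hK).norm
  refine ⟨∫ p in halfSpace n, K.indicator D p, fun ε hε => ?_⟩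
  obtain ⟨ψ, hψ, hψ0, hψK, hψφ, hψφ'⟩ := exists_contDiff_approx hφ hφc hφ0 hδ hε
  have hψc : HasCompactSupport ψ := hK.of_isClosed_subset (isClosed_tsupport ψ) hψK
  have hψ1 : ContDiff ℝ 1 ψ := hψ.of_le (by exact_mod_cast le_top)
  have hintφ := integrableOn_weakIntegrand ha hh hw hφ hφc hφS
  refine ⟨ψ, hψ, hψc, hψK.trans hKS, hψ0, ?_⟩
  rw [← integral_const_mul, ← integral_add hintφ (hD.const_mul ε)]
  refine integral_mono (integrableOn_weakIntegrand ha hh hw hψ1 hψc (hψK.trans hKS))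
    (hintφ.add (hD.const_mul ε)) fun p => ?_
  by_cases hp : p ∈ K
  · have hdψ := hψ1.differentiable one_ne_zero p
    have hdφ := hφ.differentiable one_ne_zero p
    have hbound := weakIntegrand_le_mul_of_abs_le (a := a) (h := h) (w := w) (hψφ p)
      ((congrArg norm (fderiv_fun_sub hdψ hdφ)).trans_le (hψφ' p))
    rw [weakIntegrand_sub hdψ hdφ, sub_le_iff_le_add'] at hbound
    simpa only [indicator_of_mem hp] using hbound
  · have hpφ : p ∉ tsupport φ := fun h => hp (Metric.self_subset_cthickening _ h)
    simp [hp, weakIntegrand_of_notMem_tsupport hpφ,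
      weakIntegrand_of_notMem_tsupport fun h => hp (hψK h)]

lemma isWeakSupersol_of_forall_contDiff (ha : ∀ i j, LocallyIntegrableOn (a i j) (halfSpace n))
    (hh : LocallyIntegrableOn h (halfSpace n)) (hw : ContDiffOn ℝ 1 w (halfSpace n))
    (hsmooth : ∀ ψ : Pt n → ℝ, ContDiff ℝ (⊤ : ℕ∞) ψ → HasCompactSupport ψ →
      tsupport ψ ⊆ halfSpace n → (∀ p, 0 ≤ ψ p) →
      0 ≤ ∫ p in halfSpace n, weakIntegrand a h w ψ p) : IsWeakSupersol a h w := by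
  intro φ hφ hφc hφS hφ0
  obtain ⟨G, hG⟩ := exists_contDiff_setIntegral_weakIntegrand_le ha hh hw hφ hφc hφS hφ0
  have hlim : Tendsto (fun ε => (∫ p in halfSpace n, weakIntegrand a h w φ p) + ε * G) (𝓝[>] 0)
      (𝓝 ((∫ p in halfSpace n, weakIntegrand a h w φ p) + 0 * G)) :=
    (Continuous.tendsto (by fun_prop) 0).mono_left nhdsWithin_le_nhds
  rw [zero_mul, add_zero] at hlim
  refine ge_of_tendsto hlim ?_
  filter_upwards [self_mem_nhdsWithin] with ε hε
  obtain ⟨ψ, hψ, hψc, hψS, hψ0, hψφ⟩ := hG ε hε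
  exact (hsmooth ψ hψ hψc hψS hψ0).trans hψφ

lemma oddPow_of_nonneg {q x : ℝ} (hq : q ≠ 0) (hx : 0 ≤ x) : oddPow q x = x ^ q := by
  rcases hx.eq_or_lt with rfl | hpos
  · simp [oddPow, zero_rpow hq]
  · rw [oddPow, abs_of_pos hpos, rpow_sub_one hpos.ne', div_mul_cancel₀ _ hpos.ne']

lemma isWeakSupersol_of_weakSuperSol (ha : ∀ i j, LocallyIntegrableOn (a i j) (halfSpace n))
    {q : ℝ} (hq : 0 < q) {u : Pt n → ℝ} (hu : ContDiffOn ℝ 1 u (halfSpace n))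
    (hu0 : ∀ p ∈ halfSpace n, 0 ≤ u p) (hsuper : WeakSuperSol a q u) :
    IsWeakSupersol a (fun p => u p ^ q) u := by
  have huq : ContinuousOn (fun p => u p ^ q) (halfSpace n) :=
    hu.continuousOn.rpow_const fun _ _ => Or.inr hq.le
  refine isWeakSupersol_of_forall_contDiff ha
    (huq.locallyIntegrableOn (measurableSet_halfSpace n)) hu fun ψ hψ hψc hψS hψ0 => ?_
  refine (hsuper ψ hψ hψc hψS hψ0).trans_eq
    (setIntegral_congr_fun (measurableSet_halfSpace n) fun p hp => ?_)
  simp only [weakIntegrand, coeffForm_apply, gradX, mul_assoc,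
    oddPow_of_nonneg hq.ne' (hu0 p hp)]

lemma pdT_const_mul_add_const (hw : DifferentiableAt ℝ w p) (N κ : ℝ) :
    pdT (fun x => N * w x + κ) p = N * pdT w p := by
  simp [pdT, fderiv_add_const, fderiv_const_mul hw]

lemma gradX_const_mul_add_const (hw : DifferentiableAt ℝ w p) (N κ : ℝ) :
    gradX (fun x => N * w x + κ) p = N • gradX w p := by
  ext i; simp [gradX, pdX, fderiv_add_const, fderiv_const_mul hw]

lemma isWeakSupersol_const_mul_add_const (hw : ContDiffOn ℝ 1 w (halfSpace n)) {N : ℝ}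
    (hN : 0 ≤ N) (κ : ℝ) (hsuper : IsWeakSupersol a h w) :
    IsWeakSupersol a (fun p => N * h p) (fun p => N * w p + κ) := by
  intro φ hφ hφc hφS hφ0
  refine (mul_nonneg hN (hsuper φ hφ hφc hφS hφ0)).trans_eq ?_
  rw [← integral_const_mul]
  refine setIntegral_congr_fun (measurableSet_halfSpace n) fun p hp => ?_
  have hd := differentiableAt_of_mem_halfSpace hw hp
  simp only [weakIntegrand, pdT_const_mul_add_const hd, gradX_const_mul_add_const hd, map_smul,
    smul_eq_mul]
  ring

end WeakInequality

section Energy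

variable {n : ℕ} {a : Fin n → Fin n → Pt n → ℝ} {h w ζ : Pt n → ℝ} {p : Pt n}

/-- A `C¹` cutoff `ζ` compactly supported in the half-space that varies only off the core `C`, where
`δ` controls `-ζ_t` and `Σ a_{ij} ζ_{x_i} ζ_{x_j}`. Only this sign of `ζ_t` enters the energy
estimates, so `ζ` may grow arbitrarily fast in time. -/
structure IsCutoff (a : Fin n → Fin n → Pt n → ℝ) (δ : ℝ) (C : Set (Pt n)) (ζ : Pt n → ℝ) :
    Prop where
  contDiff : ContDiff ℝ 1 ζ
  hasCompactSupport : HasCompactSupport ζ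
  tsupport_subset : tsupport ζ ⊆ halfSpace n
  nonneg : ∀ p, 0 ≤ ζ p
  le_one : ∀ p, ζ p ≤ 1
  neg_pdT_le : ∀ p ∈ halfSpace n, -pdT ζ p ≤ (tsupport ζ \ C).indicator (fun _ => δ) p
  coeffForm_le : ∀ᵐ p ∂volume.restrict (halfSpace n),
    coeffForm a p (gradX ζ p) (gradX ζ p) ≤ (tsupport ζ \ C).indicator (fun _ => δ) p

/-- The test functions `w^r ζ^{k+2}` of the energy method. -/
def testFun (w ζ : Pt n → ℝ) (r : ℝ) (k : ℕ) (p : Pt n) : ℝ := w p ^ r * ζ p ^ (k + 2)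

/-- The weighted gradient energy density `w^s ζ^{k+2} Σ a_{ij} w_{x_i} w_{x_j}`. -/
def energyDensity (a : Fin n → Fin n → Pt n → ℝ) (w ζ : Pt n → ℝ) (s : ℝ) (k : ℕ) (p : Pt n) : ℝ :=
  w p ^ s * ζ p ^ (k + 2) * coeffForm a p (gradX w p) (gradX w p)

lemma tsupport_testFun_subset (w ζ : Pt n → ℝ) (r : ℝ) (k : ℕ) :
    tsupport (testFun w ζ r k) ⊆ tsupport ζ :=
  closure_mono fun p hp hζ => hp (by simp [testFun, hζ])

lemma hasCompactSupport_testFun (hζ : HasCompactSupport ζ) (r : ℝ) (k : ℕ) :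
    HasCompactSupport (testFun w ζ r k) :=
  hζ.of_isClosed_subset (isClosed_tsupport _) (tsupport_testFun_subset w ζ r k)

lemma contDiff_testFun (hw : ContDiffOn ℝ 1 w (halfSpace n)) (hw0 : ∀ p ∈ halfSpace n, 0 < w p)
    (hζ : ContDiff ℝ 1 ζ) (hζS : tsupport ζ ⊆ halfSpace n) (r : ℝ) (k : ℕ) :
    ContDiff ℝ 1 (testFun w ζ r k) := by
  refine contDiff_iff_contDiffAt.2 fun p => ?_
  by_cases hp : p ∈ tsupport (testFun w ζ r k)
  · have hpS : p ∈ halfSpace n := hζS (tsupport_testFun_subset w ζ r k hp)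
    have hwp : ContDiffAt ℝ 1 w p := hw.contDiffAt ((isOpen_halfSpace n).mem_nhds hpS)
    exact (hwp.rpow_const_of_ne (hw0 p hpS).ne').mul (hζ.contDiffAt.pow _)
  · exact (contDiffAt_const (c := (0 : ℝ))).congr_of_eventuallyEq
      (notMem_tsupport_iff_eventuallyEq.1 hp)

lemma fderiv_testFun (hw : DifferentiableAt ℝ w p) (hwp : 0 < w p) (hζ : DifferentiableAt ℝ ζ p)
    (r : ℝ) (k : ℕ) :
    fderiv ℝ (testFun w ζ r k) p = (r * w p ^ (r - 1) * ζ p ^ (k + 2)) • fderiv ℝ w p +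
      ((k + 2) * w p ^ r * ζ p ^ (k + 1)) • fderiv ℝ ζ p := by
  have hderiv := (hw.hasFDerivAt.rpow_const (p := r) (Or.inl hwp.ne')).mul
    (hζ.hasFDerivAt.pow (k + 2))
  rw [show fderiv ℝ (testFun w ζ r k) p = _ from hderiv.fderiv, Nat.add_succ_sub_one]
  module

lemma pdT_mul_testFun_le (hw : DifferentiableAt ℝ w p) (hwp : 0 < w p)
    (hζ : DifferentiableAt ℝ ζ p) (hζ0 : 0 ≤ ζ p) (hζ1 : ζ p ≤ 1) {r d : ℝ} (hr : -1 < r)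
    (hd : 0 ≤ d) (hT : -pdT ζ p ≤ d) (k : ℕ) :
    pdT w p * testFun w ζ r k p ≤ (r + 1)⁻¹ * pdT (testFun w ζ (r + 1) k) p +
      (k + 2) / (r + 1) * w p ^ (r + 1) * ζ p ^ k * d := by
  have hr1 : 0 < r + 1 := by linarith
  have hpdT : pdT (testFun w ζ (r + 1) k) p = (r + 1) * w p ^ r * ζ p ^ (k + 2) * pdT w p +
      (k + 2) * w p ^ (r + 1) * ζ p ^ (k + 1) * pdT ζ p := by
    simp [pdT, fderiv_testFun hw hwp hζ]
  have hcut : ζ p ^ (k + 1) * -pdT ζ p ≤ ζ p ^ k * d :=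
    calc ζ p ^ (k + 1) * -pdT ζ p ≤ ζ p ^ (k + 1) * d := by gcongr
      _ ≤ ζ p ^ k * d := by
        gcongr ?_ * d
        exact pow_le_pow_of_le_one hζ0 hζ1 k.le_succ
  calc pdT w p * testFun w ζ r k p
      = (r + 1)⁻¹ * pdT (testFun w ζ (r + 1) k) p +
          (k + 2) / (r + 1) * w p ^ (r + 1) * (ζ p ^ (k + 1) * -pdT ζ p) := by
        rw [hpdT, testFun]; field
    _ ≤ (r + 1)⁻¹ * pdT (testFun w ζ (r + 1) k) p +
          (k + 2) / (r + 1) * w p ^ (r + 1) * (ζ p ^ k * d) := by gcongr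
    _ = _ := by ring

lemma coeffForm_gradX_testFun_le (hB : (coeffForm a p).IsPosSemidef)
    (hw : DifferentiableAt ℝ w p) (hwp : 0 < w p) (hζ : DifferentiableAt ℝ ζ p) (hζ0 : 0 ≤ ζ p)
    {ε d : ℝ} (hε : 0 < ε) (hX : coeffForm a p (gradX ζ p) (gradX ζ p) ≤ d) (r ρ : ℝ) (k : ℕ) :
    coeffForm a p (gradX (testFun w ζ r k) p) (gradX w p) ≤
      r * energyDensity a w ζ (r - 1) k p + ε * energyDensity a w ζ (ρ - 1) k p +
        (k + 2) ^ 2 / (4 * ε) * w p ^ (2 * r - ρ + 1) * ζ p ^ k * d := by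
  have hgrad : gradX (testFun w ζ r k) p = (r * w p ^ (r - 1) * ζ p ^ (k + 2)) • gradX w p +
      ((k + 2) * w p ^ r * ζ p ^ (k + 1)) • gradX ζ p := by
    ext i; simp [gradX, pdX, fderiv_testFun hw hwp hζ]
  have hexp : (w p ^ r) ^ 2 * (w p ^ (ρ - 1))⁻¹ = w p ^ (2 * r - ρ + 1) := by
    rw [← rpow_neg hwp.le, ← rpow_natCast, ← rpow_mul hwp.le, ← rpow_add hwp]
    congr 1; push_cast; ring
  set Q := coeffForm a p
  have hyoung : (k + 2) * w p ^ r * ζ p * Q (gradX ζ p) (gradX w p) ≤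
      ε * w p ^ (ρ - 1) * ζ p ^ 2 * Q (gradX w p) (gradX w p) +
        (k + 2) ^ 2 / (4 * ε) * w p ^ (2 * r - ρ + 1) * Q (gradX ζ p) (gradX ζ p) := by
    have hineq := bilinForm_le_mul_add_inv_mul hB (by positivity : 0 < ε * w p ^ (ρ - 1))
      (((k + 2 : ℝ) * w p ^ r) • gradX ζ p) (ζ p • gradX w p)
    simp only [map_smul, LinearMap.smul_apply, smul_eq_mul] at hineq
    rw [← hexp]
    refine (Eq.trans_le ?_ hineq).trans_eq ?_
    · ring
    · rw [mul_inv, mul_inv, div_eq_mul_inv, mul_inv]; ring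
  calc Q (gradX (testFun w ζ r k) p) (gradX w p)
      = r * energyDensity a w ζ (r - 1) k p +
          ζ p ^ k * ((k + 2) * w p ^ r * ζ p * Q (gradX ζ p) (gradX w p)) := by
        simp only [hgrad, energyDensity, map_add, map_smul, LinearMap.add_apply,
          LinearMap.smul_apply, smul_eq_mul]
        ring
    _ ≤ r * energyDensity a w ζ (r - 1) k p + ζ p ^ k *
          (ε * w p ^ (ρ - 1) * ζ p ^ 2 * Q (gradX w p) (gradX w p) +
            (k + 2) ^ 2 / (4 * ε) * w p ^ (2 * r - ρ + 1) * d) := by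
        gcongr _ + _ * ?_
        exact hyoung.trans (by gcongr)
    _ = _ := by simp only [energyDensity, Q]; ring

lemma integrableOn_energyDensity (ha : ∀ i j, LocallyIntegrableOn (a i j) (halfSpace n))
    (hw : ContDiffOn ℝ 1 w (halfSpace n)) (hw0 : ∀ p ∈ halfSpace n, 0 < w p)
    (hζ : Continuous ζ) (hζc : HasCompactSupport ζ) (hζS : tsupport ζ ⊆ halfSpace n)
    (s : ℝ) (k : ℕ) : IntegrableOn (energyDensity a w ζ s k) (halfSpace n) := by
  have hweight : ContinuousOn (fun p => w p ^ s * ζ p ^ (k + 2)) (halfSpace n) :=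
    (hw.continuousOn.rpow_const fun p hp => Or.inl (hw0 p hp).ne').mul
      (hζ.pow _).continuousOn
  have hint := integrableOn_coeffForm ha (hweight.smul (continuousOn_gradX hw))
    (continuousOn_gradX hw) hζc hζS fun p hp => by simp [image_eq_zero_of_notMem_tsupport hp]
  simp only [Pi.smul_apply', map_smul, LinearMap.smul_apply, smul_eq_mul] at hint
  exact hint

/-- The pointwise majorant, up to an exact time derivative, of the weak integrand of
`w_t ≥ Lw + h` tested with `w^r ζ^{k+2}`, after the mixed term is split by Young's inequality with
weight `ε w^{ρ-1}`. -/
def energyMajorant (a : Fin n → Fin n → Pt n → ℝ) (h w ζ : Pt n → ℝ) (δ : ℝ) (C : Set (Pt n))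
    (r ρ ε : ℝ) (k : ℕ) (p : Pt n) : ℝ :=
  r * energyDensity a w ζ (r - 1) k p + ε * energyDensity a w ζ (ρ - 1) k p +
    ((k + 2) / (r + 1) * w p ^ (r + 1) + (k + 2) ^ 2 / (4 * ε) * w p ^ (2 * r - ρ + 1)) *
      ζ p ^ k * (tsupport ζ \ C).indicator (fun _ => δ) p -
    h p * testFun w ζ r k p

lemma energyMajorant_of_notMem_tsupport {δ : ℝ} {C : Set (Pt n)} {r ρ ε : ℝ} {k : ℕ}
    (hp : p ∉ tsupport ζ) : energyMajorant a h w ζ δ C r ρ ε k p = 0 := by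
  simp [energyMajorant, energyDensity, testFun, hp, image_eq_zero_of_notMem_tsupport hp]

lemma weakIntegrand_testFun_le {δ : ℝ} {C : Set (Pt n)} (hδ : 0 ≤ δ) (hζ : IsCutoff a δ C ζ)
    (ha : DegenerateElliptic a) (hw : ContDiffOn ℝ 1 w (halfSpace n))
    (hw0 : ∀ p ∈ halfSpace n, 0 < w p) {r ε : ℝ} (hr : -1 < r) (hε : 0 < ε) (ρ : ℝ) (k : ℕ) :
    ∀ᵐ p ∂volume.restrict (halfSpace n), weakIntegrand a h w (testFun w ζ r k) p ≤
      (r + 1)⁻¹ * pdT (testFun w ζ (r + 1) k) p + energyMajorant a h w ζ δ C r ρ ε k p := by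
  filter_upwards [ae_restrict_mem (measurableSet_halfSpace n), ha.isPosSemidef, hζ.coeffForm_le]
    with p hp hB hX
  have hd := differentiableAt_of_mem_halfSpace hw hp
  have hdζ := hζ.contDiff.differentiable one_ne_zero p
  have hT := pdT_mul_testFun_le hd (hw0 p hp) hdζ (hζ.nonneg p) (hζ.le_one p) hr
    (indicator_nonneg (fun _ _ => hδ) p) (hζ.neg_pdT_le p hp) k
  have hS := coeffForm_gradX_testFun_le hB hd (hw0 p hp) hdζ (hζ.nonneg p) hε hX r ρ k
  unfold weakIntegrand energyMajorant
  linarith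

lemma setIntegral_nonneg_of_energyMajorant_le {δ : ℝ} {C : Set (Pt n)} (hδ : 0 ≤ δ)
    (hζ : IsCutoff a δ C ζ) (ha : DegenerateElliptic a) (hw : ContDiffOn ℝ 1 w (halfSpace n))
    (hw0 : ∀ p ∈ halfSpace n, 0 < w p) (hh : LocallyIntegrableOn h (halfSpace n))
    (hsuper : IsWeakSupersol a h w) {r ε : ℝ} (hr : -1 < r) (hε : 0 < ε) (ρ : ℝ) (k : ℕ)
    {F : Pt n → ℝ} (hF : IntegrableOn F (halfSpace n))
    (hle : ∀ p ∈ halfSpace n, energyMajorant a h w ζ δ C r ρ ε k p ≤ F p) :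
    0 ≤ ∫ p in halfSpace n, F p := by
  have htest := fun s => contDiff_testFun hw hw0 hζ.contDiff hζ.tsupport_subset s k
  have hsupp := fun s => (tsupport_testFun_subset w ζ s k).trans hζ.tsupport_subset
  have hcpt : ∀ s, HasCompactSupport (testFun w ζ s k) :=
    fun s => hasCompactSupport_testFun hζ.hasCompactSupport s k
  have hpdT := (integrableOn_pdT (htest (r + 1)) (hcpt (r + 1))).const_mul (r + 1)⁻¹
  calc 0 ≤ ∫ p in halfSpace n, weakIntegrand a h w (testFun w ζ r k) p :=
        hsuper _ (htest r) (hcpt r) (hsupp r) fun p => by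
          by_cases hp : p ∈ tsupport ζ
          · exact mul_nonneg (rpow_nonneg (hw0 p (hζ.tsupport_subset hp)).le r)
              (pow_nonneg (hζ.nonneg p) _)
          · simp [testFun, image_eq_zero_of_notMem_tsupport hp]
    _ ≤ ∫ p in halfSpace n, ((r + 1)⁻¹ * pdT (testFun w ζ (r + 1) k) p + F p) := by
        refine integral_mono_ae (integrableOn_weakIntegrand ha.locallyIntegrableOn hh hw (htest r)
          (hcpt r) (hsupp r)) (hpdT.add hF) ?_
        filter_upwards [weakIntegrand_testFun_le hδ hζ ha hw hw0 hr hε ρ k,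
          ae_restrict_mem (measurableSet_halfSpace n)] with p hweak hp
        exact hweak.trans (by gcongr; exact hle p hp)
    _ = ∫ p in halfSpace n, F p := by
        rw [integral_add hpdT hF, integral_const_mul,
          setIntegral_pdT_eq_zero (htest (r + 1)) (hcpt (r + 1)) (hsupp (r + 1)), mul_zero,
          zero_add]

end Energy

section SourceAbsorption

variable {q γ κ U ζ A K M : ℝ} {k : ℕ}

lemma rpow_add_sub_le_mul_rpow_mul_rpow_neg_add_one (hq : 1 ≤ q) (hγ0 : 0 ≤ γ) (hγq : γ ≤ q)
    (hκ0 : 0 < κ) (hκ1 : κ ≤ 1) (hU : 0 ≤ U) :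
    (U + κ) ^ (q - γ) ≤ 2 ^ (q - 1) * (U ^ q * (U + κ) ^ (-γ) + 1) := by
  have hW : 0 < U + κ := by positivity
  have hκ : κ ^ q * (U + κ) ^ (-γ) ≤ 1 :=
    calc κ ^ q * (U + κ) ^ (-γ) ≤ κ ^ q * κ ^ (-γ) := by
          gcongr κ ^ q * ?_
          exact rpow_le_rpow_of_nonpos hκ0 (by linarith) (by linarith)
      _ = κ ^ (q - γ) := by rw [← rpow_add hκ0, sub_eq_add_neg]
      _ ≤ 1 := rpow_le_one hκ0.le hκ1 (by linarith)
  calc (U + κ) ^ (q - γ) = (U + κ) ^ q * (U + κ) ^ (-γ) := by rw [← rpow_add hW, sub_eq_add_neg]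
    _ ≤ 2 ^ (q - 1) * (U ^ q + κ ^ q) * (U + κ) ^ (-γ) := by
      gcongr
      exact rpow_add_le_mul_add_rpow hU hκ0.le hq
    _ = 2 ^ (q - 1) * (U ^ q * (U + κ) ^ (-γ) + κ ^ q * (U + κ) ^ (-γ)) := by ring
    _ ≤ _ := by gcongr

lemma mul_rpow_mul_pow_sub_source_le (hq : 1 ≤ q) (hγ0 : 0 ≤ γ) (hγ1 : γ ≤ 1) (hγq : γ < q)
    (hk : (k + 2) * ((1 - γ) / (q - γ)) ≤ k) (hκ0 : 0 < κ) (hκ1 : κ ≤ 1) (hU : 0 ≤ U)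
    (hζ0 : 0 ≤ ζ) (hζ1 : ζ ≤ 1) (hA : 0 ≤ A) (hK : 0 ≤ K) (hM : 0 ≤ M) {c₀ : ℝ}
    (hYoung : ∀ Z, 0 ≤ Z → A * K * Z ^ ((1 - γ) / (q - γ)) ≤ (2 ^ (q - 1))⁻¹ * Z + c₀) :
    A * (U + κ) ^ (1 - γ) * ζ ^ k * (K * M) - M * U ^ q * ((U + κ) ^ (-γ) * ζ ^ (k + 2)) ≤
      M * (c₀ + 1) := by
  have hW : 0 < U + κ := by positivity
  have hpow : (U + κ) ^ (1 - γ) * ζ ^ k ≤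
      ((U + κ) ^ (q - γ) * ζ ^ (k + 2)) ^ ((1 - γ) / (q - γ)) :=
    rpow_mul_pow_le_rpow_mul_pow_rpow_div hW.le hζ0 hζ1 (by linarith) (by linarith)
      (by exact_mod_cast hk)
  have hgrowth : A * K * ((U + κ) ^ (1 - γ) * ζ ^ k) ≤
      U ^ q * ((U + κ) ^ (-γ) * ζ ^ (k + 2)) + (c₀ + 1) :=
    calc A * K * ((U + κ) ^ (1 - γ) * ζ ^ k)
        ≤ A * K * ((U + κ) ^ (q - γ) * ζ ^ (k + 2)) ^ ((1 - γ) / (q - γ)) := by gcongr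
      _ ≤ (2 ^ (q - 1))⁻¹ * ((U + κ) ^ (q - γ) * ζ ^ (k + 2)) + c₀ := hYoung _ (by positivity)
      _ ≤ (2 ^ (q - 1))⁻¹ *
            (2 ^ (q - 1) * (U ^ q * (U + κ) ^ (-γ) + 1) * ζ ^ (k + 2)) + c₀ := by
        gcongr
        exact rpow_add_sub_le_mul_rpow_mul_rpow_neg_add_one hq hγ0 hγq.le hκ0 hκ1 hU
      _ = U ^ q * ((U + κ) ^ (-γ) * ζ ^ (k + 2)) + (c₀ + ζ ^ (k + 2)) := by field
      _ ≤ _ := by gcongr; exact pow_le_one₀ hζ0 hζ1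
  linarith [mul_le_mul_of_nonneg_left hgrowth hM]

lemma mul_add_mul_rpow_mul_pow_le {B μ C : ℝ} (hq : 1 ≤ q) (hγ : 0 ≤ γ)
    (hk : (k + 2) * ((γ + 1) / q) ≤ k) (hκ : 0 ≤ κ) (hU : 0 ≤ U) (hζ0 : 0 ≤ ζ) (hζ1 : ζ ≤ 1)
    (hA : 0 ≤ A) (hB : 0 ≤ B) (hK : 0 ≤ K) (hM : 0 ≤ M) (hμ : 0 ≤ μ)
    (hYoung : ∀ Z, 0 ≤ Z → A * K * Z ^ (1 / q) + B * K * Z ^ ((γ + 1) / q) ≤ μ * Z + C) :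
    (A * (U + κ) + B * (U + κ) ^ (γ + 1)) * ζ ^ k * (K * M) ≤
      M * (μ * 2 ^ (q - 1) * (U ^ q * ζ ^ (k + 2) + κ ^ q) + C) := by
  have hq0 : 0 < q := by linarith
  have hW : 0 ≤ U + κ := by positivity
  have hk₁ : ((k + 2 : ℕ) : ℝ) * (1 / q) ≤ k := by
    refine le_trans ?_ hk
    push_cast
    gcongr
    linarith
  have hlinear := rpow_mul_pow_le_rpow_mul_pow_rpow_div hW hζ0 hζ1 zero_le_one hq0 hk₁
  have hpower := rpow_mul_pow_le_rpow_mul_pow_rpow_div hW hζ0 hζ1 (by linarith : 0 ≤ γ + 1) hq0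
    (k := k) (l := k + 2) (by exact_mod_cast hk)
  rw [rpow_one] at hlinear
  calc (A * (U + κ) + B * (U + κ) ^ (γ + 1)) * ζ ^ k * (K * M)
      = M * (A * K * ((U + κ) * ζ ^ k) + B * K * ((U + κ) ^ (γ + 1) * ζ ^ k)) := by ring
    _ ≤ M * (A * K * ((U + κ) ^ q * ζ ^ (k + 2)) ^ (1 / q) +
          B * K * ((U + κ) ^ q * ζ ^ (k + 2)) ^ ((γ + 1) / q)) := by gcongr
    _ ≤ M * (μ * ((U + κ) ^ q * ζ ^ (k + 2)) + C) := by
      gcongr M * ?_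
      exact hYoung _ (by positivity)
    _ ≤ M * (μ * (2 ^ (q - 1) * (U ^ q + κ ^ q) * ζ ^ (k + 2)) + C) := by
      gcongr
      exact rpow_add_le_mul_add_rpow hU hκ hq
    _ = M * (μ * 2 ^ (q - 1) * (U ^ q * ζ ^ (k + 2) + κ ^ q * ζ ^ (k + 2)) + C) := by ring
    _ ≤ _ := by
      gcongr
      exact mul_le_of_le_one_right (by positivity) (pow_le_one₀ hζ0 hζ1)

end SourceAbsorption

section EnergyEstimates

variable {n k : ℕ} {a : Fin n → Fin n → Pt n → ℝ} {C : Set (Pt n)} {U ζ : Pt n → ℝ}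
  {q γ K M δ κ : ℝ}

lemma setIntegral_halfSpace_indicator_tsupport (hζ : IsCutoff a δ C ζ) (b : ℝ) :
    ∫ p in halfSpace n, (tsupport ζ).indicator (fun _ => b) p = b * volume.real (tsupport ζ) := by
  rw [setIntegral_indicator (isClosed_tsupport ζ).measurableSet,
    inter_eq_right.2 hζ.tsupport_subset, setIntegral_const, smul_eq_mul, mul_comm]

lemma integrableOn_rpow_mul_pow (hζ : IsCutoff a δ C ζ) (hU : ContinuousOn U (halfSpace n))
    (hq : 0 ≤ q) (k : ℕ) : IntegrableOn (fun p => U p ^ q * ζ p ^ (k + 2)) (halfSpace n) :=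
  integrableOn_mul_of_forall_notMem_compact (isOpen_halfSpace n)
    ((hU.rpow_const fun _ _ => Or.inr hq).locallyIntegrableOn (measurableSet_halfSpace n))
    (hζ.contDiff.continuous.pow _).continuousOn hζ.hasCompactSupport hζ.tsupport_subset
    fun p hp => by simp [image_eq_zero_of_notMem_tsupport hp]

lemma setIntegral_nonneg_of_energyMajorant_add_const_le (hK : 0 ≤ K) (hM : 0 ≤ M)
    (hζ : IsCutoff a (K * M) C ζ) (ha : DegenerateElliptic a)
    (hU : ContDiffOn ℝ 1 U (halfSpace n)) (hU0 : ∀ p ∈ halfSpace n, 0 ≤ U p) (hq : 0 ≤ q)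
    (hsuper : IsWeakSupersol a (fun p => M * U p ^ q) U) (hκ : 0 < κ) {r ε : ℝ} (hr : -1 < r)
    (hε : 0 < ε) (ρ : ℝ) {F : Pt n → ℝ} (hF : IntegrableOn F (halfSpace n))
    (hle : ∀ p ∈ halfSpace n, energyMajorant a (fun p => M * U p ^ q) (fun p => U p + κ) ζ (K * M)
      C r ρ ε k p ≤ F p) : 0 ≤ ∫ p in halfSpace n, F p :=
  setIntegral_nonneg_of_energyMajorant_le (h := fun p => M * U p ^ q) (mul_nonneg hK hM) hζ ha
    (hU.add contDiffOn_const) (fun p hp => add_pos_of_nonneg_of_pos (hU0 p hp) hκ)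
    ((continuousOn_const.mul (hU.continuousOn.rpow_const fun _ _ =>
      Or.inr hq)).locallyIntegrableOn (measurableSet_halfSpace n))
    (by simpa only [one_mul] using isWeakSupersol_const_mul_add_const hU zero_le_one κ hsuper)
    hr hε ρ k hF hle

lemma integrableOn_energyDensity_add_const (hζ : IsCutoff a (K * M) C ζ)
    (ha : DegenerateElliptic a) (hU : ContDiffOn ℝ 1 U (halfSpace n))
    (hU0 : ∀ p ∈ halfSpace n, 0 ≤ U p) (hκ : 0 < κ) (s : ℝ) (k : ℕ) :
    IntegrableOn (energyDensity a (fun p => U p + κ) ζ s k) (halfSpace n) :=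
  integrableOn_energyDensity ha.locallyIntegrableOn (hU.add contDiffOn_const)
    (fun p hp => add_pos_of_nonneg_of_pos (hU0 p hp) hκ) hζ.contDiff.continuous
    hζ.hasCompactSupport hζ.tsupport_subset s k

lemma energyMajorant_neg_le (hK : 0 ≤ K) (hM : 0 ≤ M) (hζ : IsCutoff a (K * M) C ζ)
    (hU0 : ∀ p ∈ halfSpace n, 0 ≤ U p) (hq : 1 ≤ q) (hγ0 : 0 < γ) (hγ1 : γ < 1)
    (hk : (k + 2) * ((1 - γ) / (q - γ)) ≤ k) {c₀ : ℝ}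
    (hYoung : ∀ Z, 0 ≤ Z → ((k + 2) / (1 - γ) + (k + 2) ^ 2 / (2 * γ)) * K *
      Z ^ ((1 - γ) / (q - γ)) ≤ (2 ^ (q - 1))⁻¹ * Z + c₀)
    (hκ0 : 0 < κ) (hκ1 : κ ≤ 1) {p : Pt n} (hp : p ∈ halfSpace n) :
    energyMajorant a (fun p => M * U p ^ q) (fun p => U p + κ) ζ (K * M) C (-γ) (-γ) (γ / 2) k p ≤
      -(γ / 2) * energyDensity a (fun p => U p + κ) ζ (-γ - 1) k p +
        (tsupport ζ).indicator (fun _ => M * (c₀ + 1)) p := by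
  by_cases hpζ : p ∈ tsupport ζ
  · have hW : 0 < U p + κ := add_pos_of_nonneg_of_pos (hU0 p hp) hκ0
    have hζ0 := hζ.nonneg p
    have hA : 0 ≤ (k + 2) / (1 - γ) + (k + 2) ^ 2 / (2 * γ) := by
      have : 0 < 1 - γ := by linarith
      positivity
    have hcut : ((k + 2) / (1 - γ) + (k + 2) ^ 2 / (2 * γ)) * (U p + κ) ^ (1 - γ) * ζ p ^ k *
        (tsupport ζ \ C).indicator (fun _ => K * M) p ≤
        ((k + 2) / (1 - γ) + (k + 2) ^ 2 / (2 * γ)) * (U p + κ) ^ (1 - γ) * ζ p ^ k * (K * M) := by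
      gcongr
      exact indicator_le_self' (fun _ _ => mul_nonneg hK hM) p
    have hscalar := mul_rpow_mul_pow_sub_source_le hq hγ0.le hγ1.le (hγ1.trans_le hq) hk hκ0 hκ1
      (hU0 p hp) hζ0 (hζ.le_one p) hA hK hM hYoung
    rw [indicator_of_mem hpζ, energyMajorant, testFun, show -γ + 1 = 1 - γ by ring,
      show 2 * -γ - -γ + 1 = 1 - γ by ring, show 4 * (γ / 2) = 2 * γ by ring]
    linarith
  · simp [energyMajorant_of_notMem_tsupport hpζ, energyDensity,
      image_eq_zero_of_notMem_tsupport hpζ, hpζ]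

-- The negative power in the test function `(U + κ)^{-γ} ζ^{k+2}` makes the diffusion term coercive.
lemma setIntegral_energyDensity_le (hK : 0 ≤ K) (hM : 0 ≤ M) (hζ : IsCutoff a (K * M) C ζ)
    (ha : DegenerateElliptic a) (hU : ContDiffOn ℝ 1 U (halfSpace n))
    (hU0 : ∀ p ∈ halfSpace n, 0 ≤ U p) (hq : 1 ≤ q)
    (hsuper : IsWeakSupersol a (fun p => M * U p ^ q) U) (hγ0 : 0 < γ) (hγ1 : γ < 1)
    (hk : (k + 2) * ((1 - γ) / (q - γ)) ≤ k) {c₀ : ℝ}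
    (hYoung : ∀ Z, 0 ≤ Z → ((k + 2) / (1 - γ) + (k + 2) ^ 2 / (2 * γ)) * K *
      Z ^ ((1 - γ) / (q - γ)) ≤ (2 ^ (q - 1))⁻¹ * Z + c₀)
    (hκ0 : 0 < κ) (hκ1 : κ ≤ 1) :
    γ / 2 * ∫ p in halfSpace n, energyDensity a (fun p => U p + κ) ζ (-γ - 1) k p ≤
      M * (c₀ + 1) * volume.real (tsupport ζ) := by
  have hED := (integrableOn_energyDensity_add_const hζ ha hU hU0 hκ0 (-γ - 1) k).const_mul
    (-(γ / 2))
  have hconst := integrableOn_indicator_const_of_compact (s := halfSpace n) (μ := volume)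
    hζ.hasCompactSupport.isCompact (M * (c₀ + 1))
  have hnonneg := setIntegral_nonneg_of_energyMajorant_add_const_le (k := k) hK hM hζ ha hU hU0
    (by linarith) hsuper hκ0 (by linarith : -1 < -γ) (half_pos hγ0) (-γ) (hED.add hconst)
    fun p => energyMajorant_neg_le hK hM hζ hU0 hq hγ0 hγ1 hk hYoung hκ0 hκ1
  rw [integral_add' hED hconst, integral_const_mul,
    setIntegral_halfSpace_indicator_tsupport hζ] at hnonneg
  linarith

lemma energyMajorant_zero_le (hK : 0 ≤ K) (hM : 0 ≤ M) (hζ : IsCutoff a (K * M) C ζ)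
    (hU0 : ∀ p ∈ halfSpace n, 0 ≤ U p) (hq : 1 ≤ q) (hγ : 0 ≤ γ)
    (hk : (k + 2) * ((γ + 1) / q) ≤ k) {ε μ c : ℝ} (hε : 0 < ε) (hμ : 0 ≤ μ) (hc : 0 ≤ c)
    (hYoung : ∀ Z, 0 ≤ Z → (k + 2) * K * Z ^ (1 / q) +
      (k + 2) ^ 2 / (4 * ε) * K * Z ^ ((γ + 1) / q) ≤ μ * Z + c)
    (hκ : 0 < κ) {p : Pt n} (hp : p ∈ halfSpace n) :
    energyMajorant a (fun p => M * U p ^ q) (fun p => U p + κ) ζ (K * M) C 0 (-γ) ε k p ≤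
      ε * energyDensity a (fun p => U p + κ) ζ (-γ - 1) k p +
        M * (μ * 2 ^ (q - 1) * Cᶜ.indicator (fun p => U p ^ q * ζ p ^ (k + 2)) p) +
        (tsupport ζ).indicator (fun _ => M * (μ * 2 ^ (q - 1) * κ ^ q + c)) p -
        M * (U p ^ q * ζ p ^ (k + 2)) := by
  by_cases hpζ : p ∈ tsupport ζ
  · rw [energyMajorant, testFun, indicator_of_mem hpζ, zero_add, div_one, rpow_one,
      show 2 * (0 : ℝ) - -γ + 1 = γ + 1 by ring, rpow_zero]
    by_cases hpC : p ∈ C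
    · have hnonneg : 0 ≤ M * (μ * 2 ^ (q - 1) * κ ^ q + c) := by positivity
      rw [indicator_of_notMem (fun h : p ∈ tsupport ζ \ C => h.2 hpC),
        indicator_of_notMem (fun h : p ∈ Cᶜ => h hpC)]
      linarith
    · have hscalar := mul_add_mul_rpow_mul_pow_le hq hγ hk hκ.le (hU0 p hp) (hζ.nonneg p)
        (hζ.le_one p) (by positivity) (by positivity) hK hM hμ hYoung
      rw [indicator_of_mem (show p ∈ tsupport ζ \ C from ⟨hpζ, hpC⟩), indicator_of_mem
        (show p ∈ Cᶜ from hpC)]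
      linarith
  · simp [energyMajorant_of_notMem_tsupport hpζ, energyDensity, indicator,
      image_eq_zero_of_notMem_tsupport hpζ, hpζ]

-- Here the test function is `ζ^{k+2}` itself; the mixed term is paid for by the gradient energy.
lemma mul_setIntegral_rpow_mul_pow_le (hK : 0 ≤ K) (hM : 0 ≤ M) (hζ : IsCutoff a (K * M) C ζ)
    (hC : MeasurableSet C) (ha : DegenerateElliptic a) (hU : ContDiffOn ℝ 1 U (halfSpace n))
    (hU0 : ∀ p ∈ halfSpace n, 0 ≤ U p) (hq : 1 ≤ q)
    (hsuper : IsWeakSupersol a (fun p => M * U p ^ q) U) (hγ : 0 ≤ γ)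
    (hk : (k + 2) * ((γ + 1) / q) ≤ k) {ε μ c : ℝ} (hε : 0 < ε) (hμ : 0 ≤ μ) (hc : 0 ≤ c)
    (hYoung : ∀ Z, 0 ≤ Z → (k + 2) * K * Z ^ (1 / q) +
      (k + 2) ^ 2 / (4 * ε) * K * Z ^ ((γ + 1) / q) ≤ μ * Z + c)
    (hκ : 0 < κ) :
    M * ∫ p in halfSpace n, U p ^ q * ζ p ^ (k + 2) ≤
      ε * (∫ p in halfSpace n, energyDensity a (fun p => U p + κ) ζ (-γ - 1) k p) +
        M * (μ * 2 ^ (q - 1) *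
          ∫ p in Cᶜ, U p ^ q * ζ p ^ (k + 2) ∂volume.restrict (halfSpace n)) +
        M * (μ * 2 ^ (q - 1) * κ ^ q + c) * volume.real (tsupport ζ) := by
  have hED := (integrableOn_energyDensity_add_const hζ ha hU hU0 hκ (-γ - 1) k).const_mul ε
  have hUζ := integrableOn_rpow_mul_pow hζ hU.continuousOn (zero_le_one.trans hq) k
  have hUζC := ((hUζ.indicator hC.compl).const_mul (μ * 2 ^ (q - 1))).const_mul M
  have hconst := integrableOn_indicator_const_of_compact (s := halfSpace n) (μ := volume)
    hζ.hasCompactSupport.isCompact (M * (μ * 2 ^ (q - 1) * κ ^ q + c))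
  have hnonneg := setIntegral_nonneg_of_energyMajorant_add_const_le (k := k) hK hM hζ ha hU hU0
    (by linarith) hsuper hκ (by norm_num : (-1 : ℝ) < 0) hε (-γ)
    (((hED.add hUζC).add hconst).sub (hUζ.const_mul M))
    fun p => energyMajorant_zero_le hK hM hζ hU0 hq hγ hk hε hμ hc hYoung hκ
  rw [integral_sub' ((hED.add hUζC).add hconst) (hUζ.const_mul M),
    integral_add' (hED.add hUζC) hconst, integral_add' hED hUζC, integral_const_mul,
    integral_const_mul, integral_const_mul, integral_const_mul, integral_indicator hC.compl,
    setIntegral_halfSpace_indicator_tsupport hζ] at hnonneg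
  linarith

lemma setIntegral_rpow_mul_pow_le (hK : 0 ≤ K) (hM : 0 < M) (hζ : IsCutoff a (K * M) C ζ)
    (hC : MeasurableSet C) (ha : DegenerateElliptic a) (hU : ContDiffOn ℝ 1 U (halfSpace n))
    (hU0 : ∀ p ∈ halfSpace n, 0 ≤ U p) (hq : 1 ≤ q)
    (hsuper : IsWeakSupersol a (fun p => M * U p ^ q) U) (hγ0 : 0 < γ) (hγ1 : γ < 1)
    (hk₁ : (k + 2) * ((1 - γ) / (q - γ)) ≤ k) (hk₂ : (k + 2) * ((γ + 1) / q) ≤ k)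
    {c₀ ε μ c : ℝ} (hε : 0 < ε) (hμ : 0 ≤ μ) (hc : 0 ≤ c)
    (hYoung₁ : ∀ Z, 0 ≤ Z → ((k + 2) / (1 - γ) + (k + 2) ^ 2 / (2 * γ)) * K *
      Z ^ ((1 - γ) / (q - γ)) ≤ (2 ^ (q - 1))⁻¹ * Z + c₀)
    (hYoung₂ : ∀ Z, 0 ≤ Z → (k + 2) * K * Z ^ (1 / q) +
      (k + 2) ^ 2 / (4 * ε) * K * Z ^ ((γ + 1) / q) ≤ μ * Z + c) :
    ∫ p in halfSpace n, U p ^ q * ζ p ^ (k + 2) ≤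
      μ * 2 ^ (q - 1) * (∫ p in Cᶜ, U p ^ q * ζ p ^ (k + 2) ∂volume.restrict (halfSpace n)) +
        (ε * (2 / γ * (c₀ + 1)) + c) * volume.real (tsupport ζ) := by
  set I := ∫ p in halfSpace n, U p ^ q * ζ p ^ (k + 2)
  set J := ∫ p in Cᶜ, U p ^ q * ζ p ^ (k + 2) ∂volume.restrict (halfSpace n)
  set V := volume.real (tsupport ζ)
  have hbound : ∀ κ ∈ Ioc (0 : ℝ) 1, I ≤ μ * 2 ^ (q - 1) * J +
      (ε * (2 / γ * (c₀ + 1)) + (μ * 2 ^ (q - 1) * κ ^ q + c)) * V := by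
    rintro κ ⟨hκ0, hκ1⟩
    have henergy := setIntegral_energyDensity_le hK hM.le hζ ha hU hU0 hq hsuper hγ0 hγ1 hk₁
      hYoung₁ hκ0 hκ1
    have hsource := mul_setIntegral_rpow_mul_pow_le hK hM.le hζ hC ha hU hU0 hq hsuper hγ0.le hk₂
      hε hμ hc hYoung₂ hκ0
    set E := ∫ p in halfSpace n, energyDensity a (fun p => U p + κ) ζ (-γ - 1) k p
    have hεE : ε * E ≤ ε * (2 / γ) * (M * (c₀ + 1) * V) :=
      calc ε * E = ε * (2 / γ) * (γ / 2 * E) := by field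
        _ ≤ _ := by gcongr
    refine le_of_mul_le_mul_left ?_ hM
    linarith
  have hlim : Tendsto (fun κ : ℝ => μ * 2 ^ (q - 1) * J +
      (ε * (2 / γ * (c₀ + 1)) + (μ * 2 ^ (q - 1) * κ ^ q + c)) * V) (𝓝[>] 0)
      (𝓝 (μ * 2 ^ (q - 1) * J + (ε * (2 / γ * (c₀ + 1)) + (μ * 2 ^ (q - 1) * 0 ^ q + c)) * V)) := by
    have hrpow : Tendsto (fun κ : ℝ => κ ^ q) (𝓝[>] 0) (𝓝 (0 ^ q)) :=
      (continuousAt_rpow_const _ _ (Or.inr (by linarith))).tendsto.mono_left nhdsWithin_le_nhds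
    exact ((((hrpow.const_mul _).add_const _).const_add _).mul_const _).const_add _
  rw [zero_rpow (by linarith), mul_zero, zero_add] at hlim
  refine ge_of_tendsto hlim ?_
  filter_upwards [Ioc_mem_nhdsGT zero_lt_one] with κ hκ using hbound κ hκ

end EnergyEstimates

section Cutoff

lemma deriv_smoothTransition_eq_zero {x : ℝ} (hx : x ≤ 0 ∨ 1 ≤ x) :
    deriv smoothTransition x = 0 := by
  rcases hx with hx | hx
  · refine IsLocalMin.deriv_eq_zero (Eventually.of_forall fun y => ?_)
    simpa only [smoothTransition.zero_of_nonpos hx] using smoothTransition.nonneg y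
  · refine IsLocalMax.deriv_eq_zero (Eventually.of_forall fun y => ?_)
    simpa only [smoothTransition.one_of_one_le hx] using smoothTransition.le_one y

lemma deriv_smoothTransition_nonneg (x : ℝ) : 0 ≤ deriv smoothTransition x :=
  smoothTransition.monotone.deriv_nonneg

lemma differentiable_smoothTransition : Differentiable ℝ smoothTransition :=
  (smoothTransition.contDiff (n := 1)).differentiable one_ne_zero

lemma exists_deriv_smoothTransition_le : ∃ L, ∀ x, deriv smoothTransition x ≤ L := by
  have hcont : Continuous (deriv smoothTransition) :=
    (smoothTransition.contDiff (n := 1)).continuous_deriv le_rfl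
  obtain ⟨L, hL⟩ := (isCompact_Icc (a := (0 : ℝ)) (b := 1)).bddAbove_image hcont.continuousOn
  have hL0 : 0 ≤ L := (deriv_smoothTransition_nonneg 0).trans
    (hL (mem_image_of_mem _ (left_mem_Icc.2 zero_le_one)))
  refine ⟨L, fun x => ?_⟩
  by_cases hx : x ∈ Icc (0 : ℝ) 1
  · exact hL (mem_image_of_mem _ hx)
  · rw [deriv_smoothTransition_eq_zero]
    · exact hL0
    · by_contra! h
      exact hx ⟨h.1.le, h.2.le⟩

/-- A smooth cutoff in time: `0` for `t ≤ s/2`, `1` on `[s, T]`, and `0` for `2T ≤ t`. -/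
def timeCutoff (s T t : ℝ) : ℝ := smoothTransition (2 * t / s - 1) * smoothTransition (2 - t / T)

section Time

variable {s T t : ℝ}

lemma contDiff_timeCutoff (s T : ℝ) : ContDiff ℝ 1 (timeCutoff s T) :=
  (smoothTransition.contDiff.comp (by fun_prop)).mul (smoothTransition.contDiff.comp (by fun_prop))

lemma timeCutoff_nonneg (s T t : ℝ) : 0 ≤ timeCutoff s T t :=
  mul_nonneg (smoothTransition.nonneg _) (smoothTransition.nonneg _)

lemma timeCutoff_le_one (s T t : ℝ) : timeCutoff s T t ≤ 1 :=
  mul_le_one₀ (smoothTransition.le_one _) (smoothTransition.nonneg _) (smoothTransition.le_one _)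

lemma timeCutoff_eq_one (hs : 0 < s) (hT : 0 < T) (ht : t ∈ Icc s T) : timeCutoff s T t = 1 := by
  have hst : 1 ≤ t / s := (one_le_div hs).2 ht.1
  have htT : t / T ≤ 1 := (div_le_one hT).2 ht.2
  rw [timeCutoff, mul_div_assoc, smoothTransition.one_of_one_le (by linarith),
    smoothTransition.one_of_one_le (by linarith), one_mul]

lemma mem_Icc_of_timeCutoff_ne_zero (hs : 0 < s) (hT : 0 < T) (h : timeCutoff s T t ≠ 0) :
    t ∈ Icc (s / 2) (2 * T) := by
  obtain ⟨hrise, hfall⟩ := mul_ne_zero_iff.1 h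
  rw [Ne, smoothTransition.zero_iff_nonpos, not_le] at hrise hfall
  have hst : 1 < 2 * t / s := by linarith
  have htT : t / T < 2 := by linarith
  rw [one_lt_div hs] at hst
  rw [div_lt_iff₀ hT] at htT
  exact ⟨by linarith, htT.le⟩

lemma hasDerivAt_timeCutoff (s T t : ℝ) : HasDerivAt (timeCutoff s T)
    (deriv smoothTransition (2 * t / s - 1) * (2 / s) * smoothTransition (2 - t / T) -
      smoothTransition (2 * t / s - 1) * (deriv smoothTransition (2 - t / T) / T)) t := by
  have hrise : HasDerivAt (fun t => 2 * t / s - 1) (2 / s) t := by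
    simpa using (((hasDerivAt_id t).const_mul 2).div_const s).sub_const 1
  have hfall : HasDerivAt (fun t => 2 - t / T) (-(1 / T)) t :=
    ((hasDerivAt_id t).div_const T).const_sub 2
  have hprod : HasDerivAt (timeCutoff s T) _ t :=
    ((differentiable_smoothTransition _).hasDerivAt.comp t hrise).mul
      ((differentiable_smoothTransition _).hasDerivAt.comp t hfall)
  refine hprod.congr_deriv ?_
  simp only [Function.comp_apply]
  ring

lemma neg_deriv_timeCutoff_le (hs : 0 < s) (hT : 0 < T) {L : ℝ}
    (hL : ∀ x, deriv smoothTransition x ≤ L) (t : ℝ) :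
    -deriv (timeCutoff s T) t ≤ (Ioi T).indicator (fun _ => L / T) t := by
  have hrise : 0 ≤ deriv smoothTransition (2 * t / s - 1) * (2 / s) *
      smoothTransition (2 - t / T) :=
    mul_nonneg (mul_nonneg (deriv_smoothTransition_nonneg _) (by positivity))
      (smoothTransition.nonneg _)
  suffices smoothTransition (2 * t / s - 1) * (deriv smoothTransition (2 - t / T) / T) ≤
      (Ioi T).indicator (fun _ => L / T) t by
    rw [(hasDerivAt_timeCutoff s T t).deriv]
    linarith
  by_cases ht : t ∈ Ioi T
  · rw [indicator_of_mem ht]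
    calc _ ≤ deriv smoothTransition (2 - t / T) / T :=
          mul_le_of_le_one_left (div_nonneg (deriv_smoothTransition_nonneg _) hT.le)
            (smoothTransition.le_one _)
      _ ≤ L / T := by gcongr; exact hL _
  · have htT : t / T ≤ 1 := (div_le_one hT).2 (not_lt.1 ht)
    rw [indicator_of_notMem ht, deriv_smoothTransition_eq_zero (Or.inr (by linarith))]
    simp

end Time

/-- A smooth radial cutoff in space: `1` for `‖x‖ ≤ R/2` and `0` for `R ≤ ‖x‖`. The norm enters
squared so that the function is smooth at the origin. -/
def radialCutoff {E : Type*} [Norm E] (R : ℝ) (x : E) : ℝ :=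
  smoothTransition (2 - 4 * ‖x‖ ^ 2 / R ^ 2)

section Radial

variable {E : Type*} [NormedAddCommGroup E] {R : ℝ} {x : E}

lemma four_mul_norm_sq_div_le_one (hR : 0 < R) (hx : ‖x‖ ≤ R / 2) :
    4 * ‖x‖ ^ 2 / R ^ 2 ≤ 1 := by
  rw [div_le_one (by positivity)]
  nlinarith [norm_nonneg x]

lemma two_le_four_mul_norm_sq_div (hR : 0 < R) (hx : R ≤ ‖x‖) : 2 ≤ 4 * ‖x‖ ^ 2 / R ^ 2 := by
  rw [le_div_iff₀ (by positivity)]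
  nlinarith

lemma radialCutoff_eq_one (hR : 0 < R) (hx : ‖x‖ ≤ R / 2) : radialCutoff R x = 1 :=
  smoothTransition.one_of_one_le (by linarith [four_mul_norm_sq_div_le_one hR hx])

lemma norm_le_of_radialCutoff_ne_zero (hR : 0 < R) (h : radialCutoff R x ≠ 0) : ‖x‖ ≤ R := by
  by_contra! hx
  exact h (smoothTransition.zero_of_nonpos (by linarith [two_le_four_mul_norm_sq_div hR hx.le]))

lemma deriv_smoothTransition_radial_eq_zero (hR : 0 < R) (hx : ¬(R / 2 < ‖x‖ ∧ ‖x‖ < R)) :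
    deriv smoothTransition (2 - 4 * ‖x‖ ^ 2 / R ^ 2) = 0 := by
  rcases le_or_gt ‖x‖ (R / 2) with h | h
  · exact deriv_smoothTransition_eq_zero
      (Or.inr (by linarith [four_mul_norm_sq_div_le_one hR h]))
  · have hRx : R ≤ ‖x‖ := not_lt.1 fun h' => hx ⟨h, h'⟩
    exact deriv_smoothTransition_eq_zero
      (Or.inl (by linarith [two_le_four_mul_norm_sq_div hR hRx]))

variable [InnerProductSpace ℝ E]

lemma contDiff_radialCutoff (R : ℝ) : ContDiff ℝ 1 (radialCutoff R : E → ℝ) :=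
  smoothTransition.contDiff.comp
    (contDiff_const.sub ((contDiff_const.mul (contDiff_norm_sq ℝ)).div_const _))

lemma hasFDerivAt_radialCutoff (R : ℝ) (x : E) : HasFDerivAt (radialCutoff R)
    (-(8 / R ^ 2 * deriv smoothTransition (2 - 4 * ‖x‖ ^ 2 / R ^ 2)) • innerSL ℝ x) x := by
  have hcomp : HasFDerivAt (radialCutoff R) _ x :=
    (differentiable_smoothTransition (2 - 4 * ‖x‖ ^ 2 / R ^ 2)).hasDerivAt.comp_hasFDerivAt x
      ((((hasFDerivAt_id x).norm_sq.const_mul 4).mul_const (R ^ 2)⁻¹).const_sub 2)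
  refine hcomp.congr_fderiv ?_
  ext v
  simp only [id_eq, ContinuousLinearMap.comp_id, smul_neg, neg_apply, smul_apply,
    coe_innerSL_apply, nsmul_eq_mul, Nat.cast_ofNat, smul_eq_mul, neg_smul, neg_inj]
  ring

end Radial

/-- The cutoff `ζ_R` at scale `R` in space and `R^α` in time. It rises from `t = 0` already on
`[1/(2R), 1/R]`, since nothing is known about the initial data. -/
def spaceTimeCutoff {n : ℕ} (α R : ℝ) (p : Pt n) : ℝ :=
  timeCutoff R⁻¹ (R ^ α) p.1 * radialCutoff R p.2

/-- The cylinder on which `spaceTimeCutoff α R` equals `1`. -/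
def cutoffCore (n : ℕ) (α R : ℝ) : Set (Pt n) :=
  Icc R⁻¹ (R ^ α) ×ˢ Metric.closedBall 0 (R / 2)

/-- A compact cylinder in the half-space containing the support of `spaceTimeCutoff α R`. -/
def cutoffBox (n : ℕ) (α R : ℝ) : Set (Pt n) :=
  Icc (R⁻¹ / 2) (2 * R ^ α) ×ˢ Metric.closedBall 0 R

section SpaceTime

variable {n : ℕ} {α R : ℝ} {p : Pt n}

lemma contDiff_spaceTimeCutoff (α R : ℝ) : ContDiff ℝ 1 (spaceTimeCutoff α R : Pt n → ℝ) :=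
  ((contDiff_timeCutoff _ _).comp contDiff_fst).mul ((contDiff_radialCutoff R).comp contDiff_snd)

lemma spaceTimeCutoff_nonneg (α R : ℝ) (p : Pt n) : 0 ≤ spaceTimeCutoff α R p :=
  mul_nonneg (timeCutoff_nonneg _ _ _) (smoothTransition.nonneg _)

lemma spaceTimeCutoff_le_one (α R : ℝ) (p : Pt n) : spaceTimeCutoff α R p ≤ 1 :=
  mul_le_one₀ (timeCutoff_le_one _ _ _) (smoothTransition.nonneg _) (smoothTransition.le_one _)

lemma spaceTimeCutoff_eq_one (hR : 0 < R) (hp : p ∈ cutoffCore n α R) :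
    spaceTimeCutoff α R p = 1 := by
  rw [spaceTimeCutoff, timeCutoff_eq_one (by positivity) (by positivity) hp.1,
    radialCutoff_eq_one hR (mem_closedBall_zero_iff.1 hp.2), one_mul]

lemma measurableSet_cutoffCore (n : ℕ) (α R : ℝ) : MeasurableSet (cutoffCore n α R) :=
  measurableSet_Icc.prod Metric.isClosed_closedBall.measurableSet

lemma isCompact_cutoffBox (n : ℕ) (α R : ℝ) : IsCompact (cutoffBox n α R) :=
  isCompact_Icc.prod (isCompact_closedBall _ _)

lemma tsupport_spaceTimeCutoff_subset (hR : 0 < R) :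
    tsupport (spaceTimeCutoff α R : Pt n → ℝ) ⊆ cutoffBox n α R := by
  refine closure_minimal (fun p hp => ?_) (isCompact_cutoffBox n α R).isClosed
  obtain ⟨ht, hx⟩ := mul_ne_zero_iff.1 hp
  exact ⟨mem_Icc_of_timeCutoff_ne_zero (by positivity) (by positivity) ht,
    mem_closedBall_zero_iff.2 (norm_le_of_radialCutoff_ne_zero hR hx)⟩

lemma cutoffBox_subset_halfSpace (hR : 0 < R) : cutoffBox n α R ⊆ halfSpace n := fun _ hp =>
  (by positivity : 0 < R⁻¹ / 2).trans_le hp.1.1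

lemma measureReal_cutoffBox_le (n : ℕ) (α : ℝ) (hR : 0 < R) :
    volume.real (cutoffBox n α R) ≤
      R ^ α * R ^ n * (2 * volume.real (Metric.ball (0 : Xn n) 1)) := by
  have hprod : (volume : Measure (Pt n)) (cutoffBox n α R) = _ :=
    Measure.prod_prod (μ := (volume : Measure ℝ)) (ν := (volume : Measure (Xn n))) _ _
  have htime : volume.real (Icc (R⁻¹ / 2) (2 * R ^ α)) ≤ 2 * R ^ α := by
    rw [Real.volume_real_Icc]
    exact max_le (by linarith [inv_pos.2 hR]) (by positivity)
  have hspace : volume.real (Metric.closedBall (0 : Xn n) R) =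
      R ^ n * volume.real (Metric.ball (0 : Xn n) 1) := by
    simp [Measure.real, Measure.addHaar_closedBall _ _ hR.le, hR.le]
  calc volume.real (cutoffBox n α R)
      = volume.real (Icc (R⁻¹ / 2) (2 * R ^ α)) *
          volume.real (Metric.closedBall (0 : Xn n) R) := by
        simp only [Measure.real, hprod, ENNReal.toReal_mul]
    _ ≤ 2 * R ^ α * (R ^ n * volume.real (Metric.ball (0 : Xn n) 1)) := by
        rw [hspace]; gcongr
    _ = _ := by ring

lemma fderiv_spaceTimeCutoff (α R : ℝ) (p v : Pt n) : fderiv ℝ (spaceTimeCutoff α R) p v =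
    deriv (timeCutoff R⁻¹ (R ^ α)) p.1 * v.1 * radialCutoff R p.2 -
      timeCutoff R⁻¹ (R ^ α) p.1 * (8 / R ^ 2 *
        deriv smoothTransition (2 - 4 * ‖p.2‖ ^ 2 / R ^ 2)) * inner ℝ p.2 v.2 := by
  have htime : HasFDerivAt (fun p : Pt n => timeCutoff R⁻¹ (R ^ α) p.1) _ p :=
    (hasDerivAt_timeCutoff _ _ p.1).differentiableAt.hasDerivAt.comp_hasFDerivAt p
      (show HasFDerivAt Prod.fst (ContinuousLinearMap.fst ℝ ℝ (Xn n)) p from hasFDerivAt_fst)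
  have hspace : HasFDerivAt (fun p : Pt n => radialCutoff R p.2) _ p :=
    (hasFDerivAt_radialCutoff R p.2).comp p hasFDerivAt_snd
  rw [show fderiv ℝ (spaceTimeCutoff α R) p = _ from (htime.mul hspace).fderiv]
  simp only [neg_smul, ContinuousLinearMap.neg_comp, ContinuousLinearMap.smul_comp, smul_neg,
    add_apply, neg_apply, smul_apply, ContinuousLinearMap.comp_apply,
    ContinuousLinearMap.coe_snd', coe_innerSL_apply, smul_eq_mul, ContinuousLinearMap.coe_fst']
  ring

lemma pdT_spaceTimeCutoff (α R : ℝ) (p : Pt n) : pdT (spaceTimeCutoff α R) p =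
    deriv (timeCutoff R⁻¹ (R ^ α)) p.1 * radialCutoff R p.2 := by
  simp [pdT, fderiv_spaceTimeCutoff]

lemma gradX_spaceTimeCutoff (α R : ℝ) (p : Pt n) : gradX (spaceTimeCutoff α R) p =
    -(timeCutoff R⁻¹ (R ^ α) p.1 *
      (8 / R ^ 2 * deriv smoothTransition (2 - 4 * ‖p.2‖ ^ 2 / R ^ 2))) • p.2.ofLp := by
  ext i
  simp [gradX, pdX, fderiv_spaceTimeCutoff, EuclideanSpace.inner_single_right]

lemma neg_pdT_spaceTimeCutoff_le (hR : 0 < R) {L δ : ℝ}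
    (hL : ∀ x, deriv smoothTransition x ≤ L) (hδ : L * R ^ (-α) ≤ δ) (p : Pt n) :
    -pdT (spaceTimeCutoff α R) p ≤
      (tsupport (spaceTimeCutoff α R) \ cutoffCore n α R).indicator (fun _ => δ) p := by
  have hL0 : 0 ≤ L := (deriv_smoothTransition_nonneg 0).trans (hL 0)
  have hδ0 : 0 ≤ δ := le_trans (by positivity) hδ
  by_cases hp : p ∈ tsupport (spaceTimeCutoff (n := n) α R)
  · have hbound := neg_deriv_timeCutoff_le (inv_pos.2 hR) (by positivity : 0 < R ^ α) hL p.1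
    calc -pdT (spaceTimeCutoff α R) p
        = -deriv (timeCutoff R⁻¹ (R ^ α)) p.1 * radialCutoff R p.2 := by
          rw [pdT_spaceTimeCutoff, neg_mul]
      _ ≤ (Ioi (R ^ α)).indicator (fun _ => L / R ^ α) p.1 * radialCutoff R p.2 := by
          gcongr; exact smoothTransition.nonneg _
      _ ≤ (Ioi (R ^ α)).indicator (fun _ => L / R ^ α) p.1 :=
          mul_le_of_le_one_right (indicator_nonneg (fun _ _ => by positivity) _)
            (smoothTransition.le_one _)
      _ ≤ _ := ?_
    by_cases hcore : p ∈ cutoffCore n α R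
    · rw [indicator_of_notMem (s := Ioi _) (not_lt.2 hcore.1.2),
        indicator_of_notMem fun h => h.2 hcore]
    · rw [indicator_of_mem (s := _ \ _) ⟨hp, hcore⟩]
      refine (indicator_le_self' (fun _ _ => by positivity) _).trans ?_
      rwa [div_eq_mul_inv, ← rpow_neg hR.le]
  · rw [pdT_of_notMem_tsupport hp, neg_zero]
    exact indicator_nonneg (fun _ _ => hδ0) p

end SpaceTime

end Cutoff

section Scaling

variable {n : ℕ} {a : Fin n → Fin n → Pt n → ℝ} {A u : Pt n → ℝ} {α c q R : ℝ}

lemma sum_mul_eq_coeffForm (a : Fin n → Fin n → Pt n → ℝ) (p : Pt n) (ξ : Xn n) :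
    ∑ i, ∑ j, a i j p * ξ i * ξ j = coeffForm a p ξ.ofLp ξ.ofLp := by
  simp only [coeffForm_apply, mul_assoc]

lemma cond8_mono {α' c' : ℝ} (h : Cond8 A α c) (hα : α' ≤ α) (hc : c ≤ c') (hc' : 0 ≤ c') :
    Cond8 A α' c' := fun R hR => by
  have : 0 < R := one_pos.trans hR
  filter_upwards [h R hR] with p hp
  calc A p ≤ c * R ^ (2 - α) := hp
    _ ≤ c' * R ^ (2 - α') := by gcongr; exact hR.le

lemma ae_halfSpace_of_cond8 (h : Cond8 A α c) (hR : 1 < R) :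
    ∀ᵐ p ∂volume.restrict (halfSpace n), R / 2 < ‖p.2‖ → ‖p.2‖ < R → A p ≤ c * R ^ (2 - α) := by
  have hopen : IsOpen {p : Pt n | 0 < p.1 ∧ R / 2 < ‖p.2‖ ∧ ‖p.2‖ < R} :=
    (isOpen_halfSpace n).inter
      ((isOpen_lt continuous_const continuous_snd.norm).inter
        (isOpen_lt continuous_snd.norm continuous_const))
  have hA := (ae_restrict_iff' hopen.measurableSet).1 (h R hR)
  filter_upwards [ae_restrict_mem (measurableSet_halfSpace n), ae_restrict_of_ae hA]
    with p hp hAp hlow hup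
  exact hAp ⟨hp, hlow, hup⟩

lemma coeffForm_gradX_spaceTimeCutoff_le (hR : 0 < R) (hc : 0 ≤ c) {L δ : ℝ}
    (hL : ∀ x, deriv smoothTransition x ≤ L) (hδ : 64 * L ^ 2 * c * R ^ (-α) ≤ δ) {p : Pt n}
    (hform : coeffForm a p p.2.ofLp p.2.ofLp ≤ A p * ‖p.2‖ ^ 2)
    (hA : R / 2 < ‖p.2‖ → ‖p.2‖ < R → A p ≤ c * R ^ (2 - α)) :
    coeffForm a p (gradX (spaceTimeCutoff α R) p) (gradX (spaceTimeCutoff α R) p) ≤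
      (tsupport (spaceTimeCutoff α R) \ cutoffCore n α R).indicator (fun _ => δ) p := by
  have hδ0 : 0 ≤ δ := le_trans (by positivity) hδ
  set d := deriv smoothTransition (2 - 4 * ‖p.2‖ ^ 2 / R ^ 2) with hd
  set g := timeCutoff R⁻¹ (R ^ α) p.1 * (8 / R ^ 2 * d) with hg
  have hd0 : 0 ≤ d := deriv_smoothTransition_nonneg _
  have hgrad : gradX (spaceTimeCutoff α R) p = -g • p.2.ofLp := gradX_spaceTimeCutoff α R p
  by_cases hann : R / 2 < ‖p.2‖ ∧ ‖p.2‖ < R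
  · by_cases hp : p ∈ tsupport (spaceTimeCutoff (n := n) α R)
    · have hcore : p ∉ cutoffCore n α R := fun h =>
        hann.1.not_ge (mem_closedBall_zero_iff.1 h.2)
      have hg0 : 0 ≤ g := mul_nonneg (timeCutoff_nonneg _ _ _) (by positivity)
      have hgL : g ≤ 8 / R ^ 2 * L :=
        (mul_le_of_le_one_left (by positivity) (timeCutoff_le_one _ _ _)).trans
          (by gcongr; exact hL _)
      rw [indicator_of_mem (s := _ \ _) ⟨hp, hcore⟩, hgrad]
      calc coeffForm a p (-g • p.2.ofLp) (-g • p.2.ofLp)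
          = g ^ 2 * coeffForm a p p.2.ofLp p.2.ofLp := by
            simp only [map_smul, LinearMap.smul_apply, smul_eq_mul]; ring
        _ ≤ g ^ 2 * (c * R ^ (2 - α) * R ^ 2) := by
            gcongr
            refine hform.trans ?_
            gcongr
            exacts [hA hann.1 hann.2, hann.2.le]
        _ ≤ (8 / R ^ 2 * L) ^ 2 * (c * R ^ (2 - α) * R ^ 2) := by gcongr
        _ = 64 * L ^ 2 * c * R ^ (-α) := by
            rw [sub_eq_add_neg, rpow_add hR, rpow_two]; field
        _ ≤ δ := hδ
    · simp [gradX_of_notMem_tsupport hp, indicator, hp]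
  · rw [hgrad, hg, hd, deriv_smoothTransition_radial_eq_zero hR hann]
    simpa using indicator_nonneg (fun _ _ => hδ0) p

lemma exists_isCutoff_spaceTimeCutoff (hc : 0 ≤ c)
    (hform : ∀ᵐ p ∂volume.restrict (halfSpace n), ∀ ξ : Xn n,
      coeffForm a p ξ.ofLp ξ.ofLp ≤ A p * ‖ξ‖ ^ 2) (hcond8 : Cond8 A α c) :
    ∃ K, 0 ≤ K ∧ ∀ R, 1 < R →
      IsCutoff a (K * R ^ (-α)) (cutoffCore n α R) (spaceTimeCutoff α R) := by
  obtain ⟨L, hL⟩ := exists_deriv_smoothTransition_le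
  have hL0 : 0 ≤ L := (deriv_smoothTransition_nonneg 0).trans (hL 0)
  refine ⟨max L (64 * L ^ 2 * c), le_max_of_le_left hL0, fun R hR => ?_⟩
  have hR0 : 0 < R := one_pos.trans hR
  have hsupp := tsupport_spaceTimeCutoff_subset (n := n) (α := α) hR0
  exact {
    contDiff := contDiff_spaceTimeCutoff α R
    hasCompactSupport := (isCompact_cutoffBox n α R).of_isClosed_subset (isClosed_tsupport _) hsupp
    tsupport_subset := hsupp.trans (cutoffBox_subset_halfSpace hR0)
    nonneg := spaceTimeCutoff_nonneg α R
    le_one := spaceTimeCutoff_le_one α R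
    neg_pdT_le := fun p _ => neg_pdT_spaceTimeCutoff_le hR0 hL
      (by gcongr; exact le_max_left _ _) p
    coeffForm_le := by
      filter_upwards [hform, ae_halfSpace_of_cond8 hcond8 hR] with p hp hA
      exact coeffForm_gradX_spaceTimeCutoff_le hR0 hc hL (by gcongr; exact le_max_right _ _)
        (hp p.2) hA }

lemma aecover_cutoffCore (n : ℕ) (hα : 0 < α) :
    AECover (volume.restrict (halfSpace n)) atTop (cutoffCore n α) where
  measurableSet R := measurableSet_cutoffCore n α R
  ae_eventually_mem := by
    filter_upwards [ae_restrict_mem (measurableSet_halfSpace n)] with p hp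
    filter_upwards [tendsto_inv_atTop_zero.eventually_le_const hp,
      (tendsto_rpow_atTop hα).eventually_ge_atTop p.1,
      (tendsto_id.atTop_div_const two_pos).eventually_ge_atTop ‖p.2‖] with R hlow hup hspace
    exact ⟨⟨hlow, hup⟩, mem_closedBall_zero_iff.2 hspace⟩

lemma isWeakSupersol_rescale (hu : ContDiffOn ℝ 1 u (halfSpace n))
    (hu0 : ∀ p ∈ halfSpace n, 0 ≤ u p) (hsuper : IsWeakSupersol a (fun p => u p ^ q) u) {N : ℝ}
    (hN : 0 < N) : IsWeakSupersol a (fun p => N ^ (1 - q) * (N * u p) ^ q) (fun p => N * u p) := by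
  intro φ hφ hφc hφS hφ0
  have hscaled := isWeakSupersol_const_mul_add_const hu hN.le 0 hsuper φ hφ hφc hφS hφ0
  simp only [add_zero] at hscaled
  refine hscaled.trans_eq (setIntegral_congr_fun (measurableSet_halfSpace n) fun p hp => ?_)
  have hpow : N ^ (1 - q) * (N * u p) ^ q = N * u p ^ q := by
    rw [mul_rpow hN.le (hu0 p hp), ← mul_assoc, ← rpow_add hN, sub_add_cancel, rpow_one]
  simp only [weakIntegrand, hpow]

-- At the critical exponent `α = n (q - 1)` the factor `N^q` gained from the rescaling `U = N u`
-- with `N = R^n` matches the volume `R^α R^n` of the support of the cutoff exactly.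
lemma setIntegral_rpow_mul_spaceTimeCutoff_le {K γ c₀ ε μ : ℝ} {k : ℕ} (hR : 1 < R) (hK : 0 ≤ K)
    (hα : α = n * (q - 1))
    (hζ : IsCutoff a (K * R ^ (-α)) (cutoffCore n α R) (spaceTimeCutoff α R))
    (ha : DegenerateElliptic a) (hu : ContDiffOn ℝ 1 u (halfSpace n))
    (hu0 : ∀ p ∈ halfSpace n, 0 ≤ u p) (hq : 1 ≤ q)
    (hsuper : IsWeakSupersol a (fun p => u p ^ q) u) (hγ0 : 0 < γ) (hγ1 : γ < 1)
    (hk₁ : (k + 2) * ((1 - γ) / (q - γ)) ≤ k) (hk₂ : (k + 2) * ((γ + 1) / q) ≤ k)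
    (hc₀ : 0 ≤ c₀) (hε : 0 < ε) (hμ : 0 ≤ μ) (hc : 0 ≤ c)
    (hYoung₁ : ∀ Z, 0 ≤ Z → ((k + 2) / (1 - γ) + (k + 2) ^ 2 / (2 * γ)) * K *
      Z ^ ((1 - γ) / (q - γ)) ≤ (2 ^ (q - 1))⁻¹ * Z + c₀)
    (hYoung₂ : ∀ Z, 0 ≤ Z → (k + 2) * K * Z ^ (1 / q) +
      (k + 2) ^ 2 / (4 * ε) * K * Z ^ ((γ + 1) / q) ≤ μ * Z + c) :
    ∫ p in halfSpace n, u p ^ q * spaceTimeCutoff α R p ^ (k + 2) ≤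
      μ * 2 ^ (q - 1) * (∫ p in (cutoffCore n α R)ᶜ,
        u p ^ q * spaceTimeCutoff α R p ^ (k + 2) ∂volume.restrict (halfSpace n)) +
      (ε * (2 / γ * (c₀ + 1)) + c) * (2 * volume.real (Metric.ball (0 : Xn n) 1)) := by
  have hR0 : 0 < R := one_pos.trans hR
  set N : ℝ := R ^ (n : ℝ) with hN
  have hN0 : 0 < N := by positivity
  have hNα : N ^ (1 - q) = R ^ (-α) := by
    rw [hN, ← rpow_mul hR0.le, hα, ← mul_neg, neg_sub]
  have hNq : R ^ α * R ^ n = N ^ q := by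
    rw [hN, ← rpow_mul hR0.le, ← rpow_natCast, ← rpow_add hR0, hα]; ring_nf
  have hpow : ∀ᵐ p ∂volume.restrict (halfSpace n), (N * u p) ^ q *
      spaceTimeCutoff α R p ^ (k + 2) = N ^ q * (u p ^ q * spaceTimeCutoff α R p ^ (k + 2)) := by
    filter_upwards [ae_restrict_mem (measurableSet_halfSpace n)] with p hp
    rw [mul_rpow hN0.le (hu0 p hp), mul_assoc]
  have hvol : volume.real (tsupport (spaceTimeCutoff (n := n) α R)) ≤
      N ^ q * (2 * volume.real (Metric.ball (0 : Xn n) 1)) :=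
    (measureReal_mono (tsupport_spaceTimeCutoff_subset hR0)
      (isCompact_cutoffBox n α R).measure_lt_top.ne).trans
      (hNq ▸ measureReal_cutoffBox_le n α hR0)
  have henergy := setIntegral_rpow_mul_pow_le hK (by positivity) hζ (measurableSet_cutoffCore n α R)
    ha (contDiffOn_const.mul hu) (fun p hp => mul_nonneg hN0.le (hu0 p hp)) hq
    (hNα ▸ isWeakSupersol_rescale hu hu0 hsuper hN0) hγ0 hγ1 hk₁ hk₂ hε hμ hc hYoung₁ hYoung₂
  rw [integral_congr_ae hpow, integral_congr_ae (ae_restrict_of_ae hpow), integral_const_mul,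
    integral_const_mul] at henergy
  refine le_of_mul_le_mul_left ((henergy.trans (add_le_add_right
    (mul_le_mul_of_nonneg_left hvol (by positivity)) _)).trans_eq ?_) (by positivity : 0 < N ^ q)
  ring

end Scaling

section Liouville

variable {n : ℕ} {a : Fin n → Fin n → Pt n → ℝ} {u : Pt n → ℝ} {α q : ℝ}

lemma exists_energy_parameters (hq : 1 < q) (K : ℝ) : ∃ γ : ℝ, ∃ k : ℕ, ∃ c₀ : ℝ,
    0 < γ ∧ γ < 1 ∧ γ + 1 < q ∧ (k + 2) * ((1 - γ) / (q - γ)) ≤ k ∧ (k + 2) * ((γ + 1) / q) ≤ k ∧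
    0 ≤ c₀ ∧ ∀ Z, 0 ≤ Z → ((k + 2) / (1 - γ) + (k + 2) ^ 2 / (2 * γ)) * K *
      Z ^ ((1 - γ) / (q - γ)) ≤ (2 ^ (q - 1))⁻¹ * Z + c₀ := by
  obtain ⟨γ, hγ0, hγ⟩ := exists_between (lt_min one_pos (sub_pos.2 hq))
  obtain ⟨hγ1, hγq⟩ := lt_min_iff.1 hγ
  have hθ₁ : (1 - γ) / (q - γ) < 1 := (div_lt_one (by linarith)).2 (by linarith)
  have hθ₂ : (γ + 1) / q < 1 := (div_lt_one (by linarith)).2 (by linarith)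
  obtain ⟨k, hk⟩ := exists_nat_add_two_mul_le (max_lt hθ₁ hθ₂)
  obtain ⟨c₀, hc₀, hYoung⟩ := exists_const_mul_rpow_le_mul_add
    (div_nonneg (by linarith) (by linarith)) hθ₁
    (((k + 2) / (1 - γ) + (k + 2) ^ 2 / (2 * γ)) * K) (by positivity : 0 < ((2 : ℝ) ^ (q - 1))⁻¹)
  exact ⟨γ, k, c₀, hγ0, hγ1, by linarith, le_trans (by gcongr; exact le_max_left _ _) hk,
    le_trans (by gcongr; exact le_max_right _ _) hk, hc₀.le, hYoung⟩

lemma exists_forall_setIntegral_rpow_mul_spaceTimeCutoff_le {K : ℝ} (hK : 0 ≤ K)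
    (hα : α = n * (q - 1))
    (hζ : ∀ R, 1 < R → IsCutoff a (K * R ^ (-α)) (cutoffCore n α R) (spaceTimeCutoff α R))
    (ha : DegenerateElliptic a) (hu : ContDiffOn ℝ 1 u (halfSpace n))
    (hu0 : ∀ p ∈ halfSpace n, 0 ≤ u p) (hq : 1 < q)
    (hsuper : IsWeakSupersol a (fun p => u p ^ q) u) :
    ∃ k : ℕ, (∃ C, ∀ R, 1 < R →
      ∫ p in halfSpace n, u p ^ q * spaceTimeCutoff α R p ^ (k + 2) ≤
        1 / 2 * (∫ p in (cutoffCore n α R)ᶜ,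
          u p ^ q * spaceTimeCutoff α R p ^ (k + 2) ∂volume.restrict (halfSpace n)) + C) ∧
      ∀ η > 0, ∃ M, 0 < M ∧ ∀ R, 1 < R →
        ∫ p in halfSpace n, u p ^ q * spaceTimeCutoff α R p ^ (k + 2) ≤
          M * (∫ p in (cutoffCore n α R)ᶜ,
            u p ^ q * spaceTimeCutoff α R p ^ (k + 2) ∂volume.restrict (halfSpace n)) + η := by
  obtain ⟨γ, k, c₀, hγ0, hγ1, hγq, hk₁, hk₂, hc₀, hYoung⟩ := exists_energy_parameters hq K
  have hq0 : 0 < q := one_pos.trans hq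
  have hθ : (γ + 1) / q ∈ Ioo 0 1 := ⟨by positivity, (div_lt_one hq0).2 hγq⟩
  have hθ' : 1 / q ∈ Ioo 0 1 := ⟨by positivity, (div_lt_one hq0).2 hq⟩
  have hscale := fun R hR ε μ c => setIntegral_rpow_mul_spaceTimeCutoff_le (R := R) (ε := ε)
    (μ := μ) (c := c) hR hK hα (hζ R hR) ha hu hu0 hq.le hsuper hγ0 hγ1 hk₁ hk₂ hc₀
  set V := 2 * volume.real (Metric.ball (0 : Xn n) 1)
  refine ⟨k, ?_, fun η hη => ?_⟩
  · obtain ⟨c, hc, hcY⟩ := exists_const_mul_rpow_add_mul_rpow_le (Ioo_subset_Ico_self hθ')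
      (Ioo_subset_Ico_self hθ) ((k + 2) * K) ((k + 2) ^ 2 / (4 * 1) * K)
      (by positivity : 0 < 1 / 2 * ((2 : ℝ) ^ (q - 1))⁻¹)
    refine ⟨(1 * (2 / γ * (c₀ + 1)) + c) * V, fun R hR => (hscale R hR 1 _ c one_pos
      (by positivity) hc.le hYoung hcY).trans_eq ?_⟩
    rw [inv_mul_cancel_right₀ (by positivity)]
  · obtain ⟨ε, hε, hεη⟩ := exists_pos_mul_lt hη (2 * (2 / γ * (c₀ + 1) * V))
    obtain ⟨c, hc, hcη⟩ := exists_pos_mul_lt hη (2 * V)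
    obtain ⟨μ, hμ, hμY⟩ := exists_slope_mul_rpow_add_mul_rpow_le (Ioo_subset_Ioc_self hθ')
      (Ioo_subset_Ioc_self hθ) ((k + 2) * K) ((k + 2) ^ 2 / (4 * ε) * K) hc
    refine ⟨μ * 2 ^ (q - 1), by positivity, fun R hR => (hscale R hR ε μ c hε hμ.le hc.le
      hYoung hμY).trans ?_⟩
    gcongr
    linarith

lemma ae_indicator_cutoffCore_le (hu0 : ∀ p ∈ halfSpace n, 0 ≤ u p) {R : ℝ} (hR : 0 < R) (k : ℕ) :
    (cutoffCore n α R).indicator (fun p => u p ^ q) ≤ᵐ[volume.restrict (halfSpace n)]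
      fun p => u p ^ q * spaceTimeCutoff α R p ^ k := by
  filter_upwards [ae_restrict_mem (measurableSet_halfSpace n)] with p hp
  refine indicator_apply_le' (fun h => ?_) fun _ => ?_
  · rw [spaceTimeCutoff_eq_one hR h, one_pow, mul_one]
  · exact mul_nonneg (rpow_nonneg (hu0 p hp) q) (pow_nonneg (spaceTimeCutoff_nonneg α R p) k)

lemma integrableOn_rpow_and_setIntegral_eq_zero {K : ℝ} (hα0 : 0 < α) (hK : 0 ≤ K)
    (hα : α = n * (q - 1))
    (hζ : ∀ R, 1 < R → IsCutoff a (K * R ^ (-α)) (cutoffCore n α R) (spaceTimeCutoff α R))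
    (ha : DegenerateElliptic a) (hu : ContDiffOn ℝ 1 u (halfSpace n))
    (hu0 : ∀ p ∈ halfSpace n, 0 ≤ u p) (hq : 1 < q)
    (hsuper : IsWeakSupersol a (fun p => u p ^ q) u) :
    IntegrableOn (fun p => u p ^ q) (halfSpace n) ∧ ∫ p in halfSpace n, u p ^ q = 0 := by
  obtain ⟨k, ⟨C, hC⟩, hη⟩ :=
    exists_forall_setIntegral_rpow_mul_spaceTimeCutoff_le hK hα hζ ha hu hu0 hq hsuper
  have hR : ∀ m : ℕ, (1 : ℝ) < m + 2 := fun m => by linarith [m.cast_nonneg (α := ℝ)]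
  have hR0 : ∀ m : ℕ, (0 : ℝ) < m + 2 := fun m => one_pos.trans (hR m)
  have hQ : AECover (volume.restrict (halfSpace n)) atTop fun m : ℕ => cutoffCore n α (m + 2) :=
    (aecover_cutoffCore n hα0).comp_tendsto
      (tendsto_atTop_add_const_right _ 2 tendsto_natCast_atTop_atTop)
  have hf : 0 ≤ᵐ[volume.restrict (halfSpace n)] fun p => u p ^ q := by
    filter_upwards [ae_restrict_mem (measurableSet_halfSpace n)] with p hp
      using rpow_nonneg (hu0 p hp) q
  have hg : ∀ m : ℕ, IntegrableOn (fun p => u p ^ q * spaceTimeCutoff α (m + 2) p ^ (k + 2))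
      (halfSpace n) := fun m =>
    integrableOn_rpow_mul_pow (hζ _ (hR m)) hu.continuousOn (by linarith) k
  have hfg := fun m : ℕ => ae_indicator_cutoffCore_le (α := α) (q := q) hu0 (hR0 m) (k + 2)
  have hfQ : ∀ m : ℕ, IntegrableOn (fun p => u p ^ q) (cutoffCore n α (m + 2))
      (volume.restrict (halfSpace n)) := fun m => by
    refine (Integrable.integrableOn (hg m)).congr ?_
    filter_upwards [ae_restrict_mem (measurableSet_cutoffCore n α _)] with p hp
    rw [spaceTimeCutoff_eq_one (hR0 m) hp, one_pow, mul_one]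
  have hint := integrable_of_integral_le_half_add hQ hf hfQ hg hfg
    (fun m => by
      filter_upwards [hf] with p hp
      exact mul_nonneg hp (pow_nonneg (spaceTimeCutoff_nonneg α _ p) _))
    fun m => hC _ (hR m)
  refine ⟨hint, integral_eq_zero_of_forall_integral_le_mul_add hQ hf hint hg hfg (fun m => ?_)
    fun η hη0 => ?_⟩
  · filter_upwards [hf] with p hp
    exact mul_le_of_le_one_right hp
      (pow_le_one₀ (spaceTimeCutoff_nonneg α _ p) (spaceTimeCutoff_le_one α _ p))
  · obtain ⟨M, hM0, hM⟩ := hη η hη0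
    exact ⟨M, hM0, fun m => hM _ (hR m)⟩

lemma eqOn_zero_of_setIntegral_rpow_eq_zero (hu : ContinuousOn u (halfSpace n))
    (hu0 : ∀ p ∈ halfSpace n, 0 ≤ u p) (hq : 0 < q)
    (hint : IntegrableOn (fun p => u p ^ q) (halfSpace n))
    (hzero : ∫ p in halfSpace n, u p ^ q = 0) : EqOn u 0 (halfSpace n) := by
  have hae : (fun p => u p ^ q) =ᵐ[volume.restrict (halfSpace n)] 0 :=
    (setIntegral_eq_zero_iff_of_nonneg_ae (by
      filter_upwards [ae_restrict_mem (measurableSet_halfSpace n)] with p hp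
        using rpow_nonneg (hu0 p hp) q) hint).1 hzero
  intro p hp
  have hpow : u p ^ q = 0 := Measure.eqOn_open_of_ae_eq hae (isOpen_halfSpace n)
    (hu.rpow_const fun _ _ => Or.inr hq.le) continuousOn_const hp
  exact (rpow_eq_zero (hu0 p hp) hq.ne').1 hpow

lemma degenerateElliptic_of_ae_sum_nonneg
    (ha : ∀ i j, LocallyIntegrableOn (a i j) (halfSpace n))
    (hsymm : ∀ i j, ∀ᵐ p ∂volume.restrict (halfSpace n), a i j p = a j i p)
    (hnonneg : ∀ᵐ p ∂volume.restrict (halfSpace n), ∀ ξ : Xn n,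
      0 ≤ ∑ i, ∑ j, a i j p * ξ i * ξ j) : DegenerateElliptic a where
  locallyIntegrableOn := ha
  isPosSemidef := by
    filter_upwards [ae_all_iff.2 fun i => ae_all_iff.2 (hsymm i), hnonneg] with p hs hn
    refine { eq := fun x y => ?_, nonneg := fun x => ?_ }
    · simp only [coeffForm_apply]
      rw [Finset.sum_comm]
      exact Finset.sum_congr rfl fun i _ => Finset.sum_congr rfl fun j _ => by
        rw [hs j i, mul_comm (x j)]
    · exact (hn (WithLp.toLp 2 x)).trans_eq (sum_mul_eq_coeffForm a p (WithLp.toLp 2 x))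

end Liouville

theorem fujita_nonneg_supersol_general {n : ℕ} (hn : 1 ≤ n) {α c q : ℝ} (hq1 : 1 < q)
    (hq2 : q ≤ 1 + α / n) {a : Fin n → Fin n → Pt n → ℝ} {A u : Pt n → ℝ}
    (ha_int : ∀ i j, LocallyIntegrableOn (a i j) (halfSpace n))
    (ha_symm : ∀ i j, ∀ᵐ p ∂volume.restrict (halfSpace n), a i j p = a j i p)
    (hform : ∀ᵐ p ∂volume.restrict (halfSpace n), ∀ ξ : Xn n,
      0 ≤ ∑ i, ∑ j, a i j p * ξ i * ξ j ∧ ∑ i, ∑ j, a i j p * ξ i * ξ j ≤ A p * ‖ξ‖ ^ 2)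
    (hcond8 : Cond8 A α c) (hu : ContDiffOn ℝ 1 u (halfSpace n))
    (hu0 : ∀ p ∈ halfSpace n, 0 ≤ u p) (hsuper : WeakSuperSol a q u) :
    ∀ p ∈ halfSpace n, u p = 0 := by
  have hn0 : (0 : ℝ) < n := by exact_mod_cast hn
  have hcrit : n * (q - 1) ≤ α := by
    rw [← le_div_iff₀' hn0]; linarith
  have ha := degenerateElliptic_of_ae_sum_nonneg ha_int ha_symm
    (hform.mono fun p hp ξ => (hp ξ).1)
  have hupper : ∀ᵐ p ∂volume.restrict (halfSpace n), ∀ ξ : Xn n,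
      coeffForm a p ξ.ofLp ξ.ofLp ≤ A p * ‖ξ‖ ^ 2 :=
    hform.mono fun p hp ξ => (sum_mul_eq_coeffForm a p ξ).symm.trans_le (hp ξ).2
  have hq0 : 0 < q := one_pos.trans hq1
  obtain ⟨K, hK, hζ⟩ := exists_isCutoff_spaceTimeCutoff (abs_nonneg c) hupper
    (cond8_mono hcond8 hcrit (le_abs_self c) (abs_nonneg c))
  obtain ⟨hint, hzero⟩ := integrableOn_rpow_and_setIntegral_eq_zero
    (mul_pos hn0 (sub_pos.2 hq1)) hK rfl hζ ha hu hu0 hq1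
    (isWeakSupersol_of_weakSuperSol ha_int hq0 hu hu0 hsuper)
  exact eqOn_zero_of_setIntegral_rpow_eq_zero hu.continuousOn hu0 hq0 hint hzero

/-- the Fujita-type theorem for non-negative weak super-solutions
of the Cauchy problem with arbitrary initial data (Theorem 6). -/
theorem fujita_nonneg_supersol
    (n : ℕ) (hn : 1 ≤ n) (α c q : ℝ) (hα : 0 < α) (hc : 0 < c)
    (hq1 : 1 < q) (hq2 : q ≤ 1 + α / n)
    (a : Fin n → Fin n → Pt n → ℝ) (A : Pt n → ℝ)
    (ha_meas : ∀ i j, Measurable (a i j))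
    (ha_locbdd : ∀ i j, ∀ K : Set (Pt n), IsCompact K → K ⊆ halfSpace n →
      ∃ M, ∀ p ∈ K, |a i j p| ≤ M)
    (ha_symm : ∀ i j, ∀ᵐ p ∂(volume.restrict (halfSpace n)), a i j p = a j i p)
    (hA_meas : Measurable A)
    (hA_nonneg : ∀ p, 0 ≤ A p)
    (hA_locbdd : ∀ K : Set (Pt n), IsCompact K → K ⊆ halfSpace n →
      ∃ M, ∀ p ∈ K, A p ≤ M)
    (hform : ∀ᵐ p ∂(volume.restrict (halfSpace n)), ∀ ξ : Xn n,
      0 ≤ ∑ i, ∑ j, a i j p * ξ i * ξ j ∧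
      ∑ i, ∑ j, a i j p * ξ i * ξ j ≤ A p * ‖ξ‖ ^ 2)
    (hcond8 : Cond8 A α c)
    (u : Pt n → ℝ)
    -- `u` is continuous on `[0,∞) × ℝⁿ`; the initial data `u(0,·)` is
    -- unrestricted
    (hu_cont : ContinuousOn u {p : Pt n | 0 ≤ p.1})
    (hu : ContDiffOn ℝ 1 u (halfSpace n))
    (hu_int : LocallyIntegrableOn (fun p => |u p| ^ q) (halfSpace n) volume)
    (hsupersol : WeakSuperSol a q u)
    (hu_nonneg : ∀ p, 0 ≤ p.1 → 0 ≤ u p) :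
    ∀ p ∈ halfSpace n, u p = 0 := by
  have ha_int : ∀ i j, LocallyIntegrableOn (a i j) (halfSpace n) := fun i j =>
    (locallyIntegrableOn_iff (isOpen_halfSpace n).isLocallyClosed).2 fun _ hKS hK =>
      integrableOn_of_bounded_on_compacts (ha_meas i j).aestronglyMeasurable (ha_locbdd i j) hK hKS
  exact fujita_nonneg_supersol_general hn hq1 hq2 ha_int ha_symm hform hcond8 hu
    (fun p hp => hu_nonneg p (le_of_lt hp)) hsupersol
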